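/- arXiv:1502.03573 — 11 statements merged into one kernel-verified Lean document; each statement's English description precedes it below -/
import Mathlib

section
/- Fundamental theorem of finite automata: for a finite alphabet A, a language over A is denoted by some rational expression over A if and only if it is accepted by some nondeterministic finite automaton over A with a finite state set. -/
/-!
From expressions to automata: by Myhill-Nerode, it is enough that a language denoted by an
expression has finitely many left quotients `x⁻¹L = {y | xy ∈ L}`. This property is inherited by
the rational operations because a quotient of a product or of a star is a combination of quotients
of the factors, taken from a finite stock:
`x⁻¹(L·K) = (x⁻¹L)·K ∪ ⋃ v⁻¹K`, over the factorisations `x = uv` with `u ∈ L`, and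
`x⁻¹(L∗) = (⋃ v⁻¹L)·L∗` for `x ≠ ε`, over the factorisations `x = uv` with `u ∈ L∗`.

From automata to expressions: the languages `X q` accepted from the single states `q` satisfy a
finite linear system `X p = ∑ q, C p q · X q + B p`, where `C p q` is a finite set of letters
and `B p` is `0` or `1`. Such a system is solved by Gaussian elimination, where Arden's lemma
(`X = C·X + B` and `ε ∉ C` imply `X = C∗·B`) replaces division by the pivot. The solution only
involves rational operations on the coefficients. Finiteness of the alphabet is what makes the
coefficients `C p q` rational.
-/

open Computability

/-! ### Quotients of languages denoted by expressions -/

theorem leftQuotient_mul_eq {A : Type} (L K : Language A) (x : List A) :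
    (L * K).leftQuotient x =
      L.leftQuotient x * K + sSup {M | ∃ u v, u ∈ L ∧ u ++ v = x ∧ K.leftQuotient v = M} := by
  ext y
  simp only [Language.mem_leftQuotient, Language.mem_add, Language.mem_mul]
  constructor
  · rintro ⟨u, hu, w, hw, h⟩
    rcases List.append_eq_append_iff.1 h with ⟨v, rfl, rfl⟩ | ⟨v, rfl, rfl⟩
    · exact Or.inr (Set.mem_sUnion.2 ⟨_, ⟨u, v, hu, rfl, rfl⟩, hw⟩)
    · exact Or.inl ⟨v, hu, w, hw, rfl⟩
  · rintro (⟨v, hv, w, hw, rfl⟩ | h)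
    · exact ⟨_, hv, w, hw, by simp⟩
    · obtain ⟨_, ⟨u, v, hu, rfl, rfl⟩, hw⟩ := Set.mem_sUnion.1 h
      exact ⟨u, hu, v ++ y, hw, by simp⟩

theorem append_mem_kstar {A : Type} {L : Language A} {u v : List A} (hu : u ∈ L∗) (hv : v ∈ L∗) :
    u ++ v ∈ L∗ := by
  rw [← kstar_mul_kstar L]
  exact Language.append_mem_mul hu hv

theorem mem_kstar_of_mem {A : Type} {L : Language A} {u : List A} (hu : u ∈ L) : u ∈ L∗ :=
  Language.mem_kstar.2 ⟨[u], by simp, by simpa using hu⟩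

/-- The empty word has to be excluded: `ε⁻¹(L∗) = L∗` contains `ε`, but `L·L∗` need not. -/
theorem leftQuotient_kstar_eq {A : Type} (L : Language A) (x : List A) (hx : x ≠ []) :
    (L∗).leftQuotient x =
      sSup {M | ∃ u v, u ∈ L∗ ∧ u ++ v = x ∧ L.leftQuotient v = M} * L∗ := by
  ext y
  simp only [Language.mem_leftQuotient, Language.mem_mul]
  constructor
  · rintro h
    obtain ⟨ws, hxy, hws⟩ := Language.mem_kstar.1 h
    clear h
    -- Peel off words until the end of `x` falls inside the current one.
    induction ws generalizing x with
    | nil => simp_all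
    | cons w ws ih =>
      have hw : w ∈ L := hws w (by simp)
      have hws' : ∀ z ∈ ws, z ∈ L := fun z hz => hws z (by simp [hz])
      rw [List.flatten_cons] at hxy
      rcases List.append_eq_append_iff.1 hxy with ⟨v, rfl, rfl⟩ | ⟨v, rfl, h⟩
      · exact ⟨v, Set.mem_sUnion.2 ⟨_, ⟨[], x, Language.nil_mem_kstar L, rfl, rfl⟩, hw⟩,
          _, Language.join_mem_kstar hws', rfl⟩
      · by_cases hv : v = []
        · subst hv
          refine ⟨[], Set.mem_sUnion.2 ⟨_, ⟨[], _, Language.nil_mem_kstar L, rfl, rfl⟩, ?_⟩,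
            y, ?_, rfl⟩
          · refine (Language.mem_leftQuotient (w ++ []) []).2 ?_
            simpa using hw
          · simp only [List.nil_append] at h
            exact h ▸ Language.join_mem_kstar hws'
        · obtain ⟨p, hp, q, hq, rfl⟩ := ih v hv h.symm hws'
          obtain ⟨_, ⟨u, t, hu, rfl, rfl⟩, ht⟩ := Set.mem_sUnion.1 hp
          exact ⟨p, Set.mem_sUnion.2 ⟨_, ⟨w ++ u, t, append_mem_kstar (mem_kstar_of_mem hw) hu,
            by simp, rfl⟩, ht⟩, q, hq, rfl⟩
  · rintro ⟨p, hp, q, hq, rfl⟩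
    obtain ⟨_, ⟨u, v, hu, rfl, rfl⟩, hw⟩ := Set.mem_sUnion.1 hp
    have := append_mem_kstar hu (append_mem_kstar (mem_kstar_of_mem hw) hq)
    simpa using this

theorem isRegular_matches' {A : Type} (E : RegularExpression A) : E.matches'.IsRegular := by
  induction E with
  | zero =>
    refine Language.IsRegular.of_finite_range_leftQuotient
      ((Set.finite_singleton (0 : Language A)).subset ?_)
    rintro _ ⟨x, rfl⟩
    rfl
  | epsilon =>
    refine Language.IsRegular.of_finite_range_leftQuotient
      ((Set.toFinite {(0 : Language A), 1}).subset ?_)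
    rintro _ ⟨x, rfl⟩
    cases x with
    | nil => exact Or.inr rfl
    | cons a x =>
      refine Or.inl (Language.ext fun y => ?_)
      simp [Language.mem_leftQuotient, Language.mem_one]
  | char a =>
    refine Language.IsRegular.of_finite_range_leftQuotient
      ((Set.toFinite {(0 : Language A), 1, {[a]}}).subset ?_)
    rintro _ ⟨x, rfl⟩
    have hmem : ∀ z : List A, z ∈ ({[a]} : Language A) ↔ z = [a] := fun _ => Iff.rfl
    rw [RegularExpression.matches'_char]
    rcases x with _ | ⟨b, _ | ⟨c, x⟩⟩
    · exact Or.inr (Or.inr rfl)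
    · by_cases hb : b = a
      · refine Or.inr (Or.inl (Language.ext fun y => ?_))
        simp [Language.mem_leftQuotient, Language.mem_one, hmem, hb]
      · refine Or.inl (Language.ext fun y => ?_)
        simp [Language.mem_leftQuotient, hmem, hb]
    · refine Or.inl (Language.ext fun y => ?_)
      simp [Language.mem_leftQuotient, hmem]
  | plus E F hE hF => exact hE.add hF
  | comp E F hE hF =>
    refine Language.IsRegular.of_finite_range_leftQuotient ((Set.Finite.image2
      (fun M S => M * F.matches' + sSup S) hE.finite_range_leftQuotient
      hF.finite_range_leftQuotient.finite_subsets).subset ?_)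
    rintro _ ⟨x, rfl⟩
    refine ⟨_, ⟨x, rfl⟩, _, ?_, (leftQuotient_mul_eq E.matches' F.matches' x).symm⟩
    rintro _ ⟨u, v, -, -, rfl⟩
    exact ⟨v, rfl⟩
  | star E hE =>
    refine Language.IsRegular.of_finite_range_leftQuotient
      (((hE.finite_range_leftQuotient.finite_subsets.image
        (fun S => sSup S * (E.matches')∗)).insert (E.matches')∗).subset ?_)
    rintro _ ⟨x, rfl⟩
    by_cases hx : x = []
    · subst hx
      exact Or.inl rfl
    · refine Or.inr ⟨_, ?_, (leftQuotient_kstar_eq E.matches' x hx).symm⟩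
      rintro _ ⟨u, v, -, -, rfl⟩
      exact ⟨v, rfl⟩

/-! ### Linear systems with rational coefficients -/

/-- A language is rational when some rational expression denotes it. -/
def IsRational {A : Type} (L : Language A) : Prop := ∃ E : RegularExpression A, E.matches' = L

namespace IsRational

variable {A : Type} {L K : Language A}

theorem zero : IsRational (0 : Language A) := ⟨0, rfl⟩

theorem one : IsRational (1 : Language A) := ⟨1, rfl⟩

theorem char (a : A) : IsRational ({[a]} : Language A) := ⟨.char a, rfl⟩

theorem add (hL : IsRational L) (hK : IsRational K) : IsRational (L + K) := by
  obtain ⟨E, rfl⟩ := hL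
  obtain ⟨F, rfl⟩ := hK
  exact ⟨E + F, rfl⟩

theorem mul (hL : IsRational L) (hK : IsRational K) : IsRational (L * K) := by
  obtain ⟨E, rfl⟩ := hL
  obtain ⟨F, rfl⟩ := hK
  exact ⟨E * F, rfl⟩

theorem kstar (hL : IsRational L) : IsRational L∗ := by
  obtain ⟨E, rfl⟩ := hL
  exact ⟨E.star, rfl⟩

theorem sum {ι : Type} (s : Finset ι) {f : ι → Language A} (hf : ∀ i ∈ s, IsRational (f i)) :
    IsRational (∑ i ∈ s, f i) :=
  Finset.sum_induction f IsRational (fun _ _ => add) zero hf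

end IsRational

theorem mem_finset_sum {A ι : Type} (s : Finset ι) (f : ι → Language A) (x : List A) :
    x ∈ ∑ i ∈ s, f i ↔ ∃ i ∈ s, x ∈ f i := by
  classical
  induction s using Finset.induction_on with
  | empty => simp
  | insert i s hi ih => rw [Finset.sum_insert hi, Language.mem_add, ih, Finset.exists_mem_insert]

theorem nil_notMem_mul {A : Type} {L K : Language A} (hL : [] ∉ L) : [] ∉ L * K := by
  rintro ⟨u, hu, v, -, h⟩
  exact hL ((List.append_eq_nil_iff.1 h).1 ▸ hu)

/-- Gaussian elimination: a solution of a finite linear system with rational coefficients is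
rational, provided that the coefficients of the unknowns do not contain the empty word. -/
theorem isRational_of_linear_system {A Q : Type} (X : Q → Language A) (s : Finset Q) :
    ∀ (C : Q → Q → Language A) (B : Q → Language A),
      (∀ p q, IsRational (C p q)) → (∀ p q, [] ∉ C p q) → (∀ p, IsRational (B p)) →
      (∀ p ∈ s, X p = ∑ q ∈ s, C p q * X q + B p) → ∀ p ∈ s, IsRational (X p) := by
  classical
  induction s using Finset.induction_on with
  | empty => simp
  | insert r s hr ih =>
    intro C B hC hε hB hX
    have hpivot : X r = (C r r)∗ * (∑ q ∈ s, C r q * X q + B r) := by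
      rw [← Language.self_eq_mul_add_iff (hε r r), ← add_assoc,
        ← Finset.sum_insert (f := fun q => C r q * X q) hr]
      exact hX r (Finset.mem_insert_self r s)
    have hs : ∀ p ∈ s, IsRational (X p) := by
      -- The coefficients obtained by substituting `hpivot` in the other equations.
      refine ih (fun p q => C p q + C p r * (C r r)∗ * C r q)
        (fun p => C p r * (C r r)∗ * B r + B p)
        (fun p q => (hC p q).add (((hC p r).mul (hC r r).kstar).mul (hC r q)))
        (fun p q => ?_)
        (fun p => (((hC p r).mul (hC r r).kstar).mul (hB r)).add (hB p))
        (fun p hp => ?_)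
      · rw [Language.mem_add, mul_assoc]
        exact not_or.2 ⟨hε p q, nil_notMem_mul (hε p r)⟩
      · have h := hX p (Finset.mem_insert_of_mem hp)
        rw [Finset.sum_insert hr, hpivot] at h
        rw [h]
        simp only [add_mul, mul_add, Finset.sum_add_distrib, Finset.mul_sum, mul_assoc]
        abel
    intro p hp
    rcases Finset.mem_insert.1 hp with rfl | hp
    · rw [hpivot]
      exact (hC p p).kstar.mul
        ((IsRational.sum s fun q hq => (hC p q).mul (hs q hq)).add (hB p))
    · exact hs p hp

/-! ### The linear system of an automaton -/

theorem mem_acceptsFrom_iff_exists {A Q : Type} (M : NFA A Q) (S : Set Q) (x : List A) :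
    x ∈ M.acceptsFrom S ↔ ∃ q ∈ S, x ∈ M.acceptsFrom {q} := by
  simp only [NFA.mem_acceptsFrom, NFA.mem_evalFrom_iff_exists (S := S)]
  tauto

theorem isRational_accepts {A Q : Type} [Fintype A] [Fintype Q] (M : NFA A Q) :
    IsRational M.accepts := by
  classical
  have hX : ∀ p, IsRational (M.acceptsFrom {p}) := by
    have hmemC : ∀ (p q : Q) (x : List A),
        x ∈ (∑ a : A, if q ∈ M.step p a then ({[a]} : Language A) else 0) ↔
          ∃ a, q ∈ M.step p a ∧ x = [a] := by
      intro p q x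
      rw [mem_finset_sum]
      refine ⟨?_, ?_⟩
      · rintro ⟨a, -, h⟩
        split_ifs at h with ha
        · exact ⟨a, ha, h⟩
        · exact absurd h (Language.notMem_zero x)
      · rintro ⟨a, ha, rfl⟩
        exact ⟨a, Finset.mem_univ a, by rw [if_pos ha]; rfl⟩
    have hsystem := isRational_of_linear_system (fun p => M.acceptsFrom {p}) Finset.univ
      (fun p q => ∑ a : A, if q ∈ M.step p a then ({[a]} : Language A) else 0)
      (fun p => if p ∈ M.accept then 1 else 0)
      (fun p q => IsRational.sum _ fun a _ => by
        split_ifs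
        exacts [IsRational.char a, IsRational.zero])
      (fun p q h => by simpa using (hmemC p q []).1 h)
      (fun p => by
        split_ifs
        exacts [IsRational.one, IsRational.zero])
      (fun p _ => by
        ext x
        have hB : x ∈ (if p ∈ M.accept then (1 : Language A) else 0) ↔ p ∈ M.accept ∧ x = [] := by
          split_ifs with h <;> simp [h, Language.mem_one]
        rw [Language.mem_add, hB, mem_finset_sum]
        simp only [Language.mem_mul, hmemC]
        cases x with
        | nil => simp
        | cons a x =>
          rw [NFA.cons_mem_acceptsFrom, NFA.stepSet_singleton, mem_acceptsFrom_iff_exists]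
          constructor
          · rintro ⟨q, hq, hx⟩
            exact Or.inl ⟨q, Finset.mem_univ q, [a], ⟨a, hq, rfl⟩, x, hx, rfl⟩
          · rintro (⟨q, -, _, ⟨b, hq, rfl⟩, y, hy, h⟩ | ⟨-, h⟩)
            · obtain ⟨rfl, rfl⟩ := List.cons_eq_cons.1 h
              exact ⟨q, hq, hy⟩
            · cases h)
    exact fun p => hsystem p (Finset.mem_univ p)
  have haccepts : M.accepts = ∑ p ∈ Finset.univ.filter (· ∈ M.start), M.acceptsFrom {p} := by
    ext x
    rw [NFA.accepts_eq_acceptsFrom_start, mem_acceptsFrom_iff_exists, mem_finset_sum]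
    simp
  rw [haccepts]
  exact IsRational.sum _ fun p _ => hX p

/-- **Fundamental theorem of finite automata.** For a finite alphabet `A`, a language over `A`
is denoted by some rational expression over `A` if and only if it is accepted by some
nondeterministic finite automaton over `A` with a finite state set. -/
theorem fundamental_theorem_of_finite_automata {A : Type} [Fintype A] (L : Language A) :
    (∃ E : RegularExpression A, E.matches' = L) ↔
      ∃ (Q : Type) (_ : Fintype Q) (M : NFA A Q), M.accepts = L := by
  constructor
  · rintro ⟨E, rfl⟩
    obtain ⟨Q, hQ, M, hM⟩ := isRegular_matches' E
    exact ⟨Q, hQ, M.toNFA, M.toNFA_correct.trans hM⟩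
  · rintro ⟨Q, hQ, M, rfl⟩
    exact isRational_accepts M
end

section
/- Γ-maps: for every nondeterministic finite automaton over a finite alphabet A with a finite state set, there exists a rational expression over A whose denoted language equals the language accepted by the automaton. -/
/-!
The proof is the McNaughton–Yamada argument. For a set `S` of states let `L S p q` be the language
of labels of computations from `p` to `q` all of whose intermediate states lie in `S`. Cutting a
computation at its visits to a state `k` gives (`through_insert`)

`L (S ∪ {k}) p q = L S p q + L S p k * (L S k k)∗ * L S k q`.

Rational languages (those denoted by an expression) are closed under the operations on the right,
and `L ∅ p q` is a finite union of letters, together with `ε` when `p = q`. By induction on `S`,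
every `L S p q` with `S` finite is rational. The language accepted by the automaton is the finite
union of `L univ p q` over initial `p` and accepting `q`.
-/

/-- A language is rational when some rational expression denotes it. -/
def IsRat {A : Type} (L : Language A) : Prop :=
  ∃ E : RegularExpression A, E.matches' = L

namespace IsRat

variable {A : Type} {L K : Language A}

theorem zero : IsRat (0 : Language A) := ⟨0, rfl⟩

theorem one : IsRat (1 : Language A) := ⟨1, rfl⟩

theorem letter (a : A) : IsRat ({[a]} : Language A) := ⟨.char a, rfl⟩

theorem add (hL : IsRat L) (hK : IsRat K) : IsRat (L + K) := by
  obtain ⟨E, rfl⟩ := hL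
  obtain ⟨F, rfl⟩ := hK
  exact ⟨E + F, rfl⟩

theorem mul (hL : IsRat L) (hK : IsRat K) : IsRat (L * K) := by
  obtain ⟨E, rfl⟩ := hL
  obtain ⟨F, rfl⟩ := hK
  exact ⟨E * F, rfl⟩

theorem kstar (hL : IsRat L) : IsRat (KStar.kstar L) := by
  obtain ⟨E, rfl⟩ := hL
  exact ⟨E.star, rfl⟩

theorem iSup {ι : Type} [Finite ι] {f : ι → Language A} (h : ∀ i, IsRat (f i)) :
    IsRat (⨆ i, f i) := by
  classical
  have := Fintype.ofFinite ι
  have key : ∀ s : Finset ι, IsRat (⨆ i ∈ s, f i) := by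
    intro s
    induction s using Finset.induction_on with
    | empty =>
      rw [show (⨆ i ∈ (∅ : Finset ι), f i) = ⊥ by simp]
      exact zero
    | insert i s _ ih =>
      rw [Finset.iSup_insert]
      exact (h i).add ih
  simpa using key Finset.univ

end IsRat

/-- `Through M S p q w`: the word `w` labels a computation of `M` from `p` to `q` whose
intermediate states (the endpoints `p` and `q` excluded) all lie in `S`. The empty computation
is included when `p = q`. -/
inductive Through {A Q : Type} (M : NFA A Q) (S : Set Q) : Q → Q → List A → Prop
  | nil (p : Q) : Through M S p p []
  | edge {p q : Q} {a : A} : q ∈ M.step p a → Through M S p q [a]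
  | cons {p r q : Q} {a : A} {x : List A} :
      r ∈ M.step p a → r ∈ S → Through M S r q x → Through M S p q (a :: x)

/-- The language of the computations described by `Through`. -/
def through {A Q : Type} (M : NFA A Q) (S : Set Q) (p q : Q) : Language A :=
  {w | Through M S p q w}

section

variable {A Q : Type} {M : NFA A Q} {S T : Set Q} {p q k : Q}

theorem mem_through {w : List A} : w ∈ through M S p q ↔ Through M S p q w := Iff.rfl

theorem through_mono (h : S ⊆ T) : through M S p q ≤ through M T p q := by
  intro w hw
  change Through M T p q w
  induction hw with
  | nil p => exact .nil p
  | edge h1 => exact .edge h1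
  | cons h1 h2 _ ih => exact .cons h1 (h h2) ih

theorem through_mul_le (hk : k ∈ S) :
    through M S p k * through M S k q ≤ through M S p q := by
  intro w hw
  obtain ⟨u, hu, v, hv, rfl⟩ := Language.mem_mul.1 hw
  change Through M S p q (u ++ v)
  change Through M S p k u at hu
  induction hu with
  | nil p => exact hv
  | edge h1 => exact .cons h1 hk hv
  | cons h1 h2 _ ih => exact .cons h1 h2 (ih hk hv (Language.append_mem_mul ‹_› hv))

/-- Allowing one more intermediate state `k`: a computation either avoids `k` in its interior or
splits at its first and last interior visits to `k`, with loops at `k` in between. -/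
theorem through_insert (M : NFA A Q) (S : Set Q) (k p q : Q) :
    through M (insert k S) p q = through M S p q +
      through M S p k * (KStar.kstar (through M S k k) * through M S k q) := by
  have hsub : S ⊆ insert k S := Set.subset_insert k S
  have hk : k ∈ insert k S := Set.mem_insert k S
  apply le_antisymm
  · intro w hw
    induction (mem_through.1 hw) with
    | nil p => exact Or.inl (.nil p)
    | edge h1 => exact Or.inl (.edge h1)
    | @cons p r q a x h1 h2 h3 ih =>
      rcases (Language.mem_add _ _ _).1 (ih h3) with hx | hx
      · rcases h2 with rfl | h2
        · exact Or.inr (Language.append_mem_mul (a := [a]) (.edge h1)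
            (Language.append_mem_mul (a := []) (Language.nil_mem_kstar _) hx))
        · exact Or.inl (.cons h1 h2 hx)
      · right
        rcases h2 with rfl | h2
        · -- Here the added state is `r`: the part of `x` up to its first return to `r` is a loop.
          refine Language.append_mem_mul (a := [a]) (.edge h1) ?_
          rw [← mul_assoc] at hx
          have hle : through M S r r * KStar.kstar (through M S r r) * through M S r q ≤
              KStar.kstar (through M S r r) * through M S r q :=
            mul_le_mul' mul_kstar_le_kstar le_rfl
          exact hle hx
        · obtain ⟨u, hu, v, hv, rfl⟩ := Language.mem_mul.1 hx
          exact Language.append_mem_mul (a := a :: u) (.cons h1 h2 hu) hv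
  · apply add_le (through_mono hsub)
    calc through M S p k * (KStar.kstar (through M S k k) * through M S k q)
        ≤ through M (insert k S) p k *
          (KStar.kstar (through M (insert k S) k k) * through M (insert k S) k q) :=
          mul_le_mul' (through_mono hsub)
            (mul_le_mul' (kstar_mono (through_mono hsub)) (through_mono hsub))
      _ ≤ through M (insert k S) p k * through M (insert k S) k q :=
          mul_le_mul' le_rfl (kstar_mul_le_self (through_mul_le hk))
      _ ≤ through M (insert k S) p q := through_mul_le hk

theorem isRat_through_empty [Finite A] (M : NFA A Q) (p q : Q) : IsRat (through M ∅ p q) := by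
  have h : through M ∅ p q =
      (⨆ _ : PLift (p = q), 1) + ⨆ a : {a // q ∈ M.step p a}, ({[a.1]} : Language A) := by
    ext w
    rw [Language.mem_add, Language.mem_iSup, Language.mem_iSup]
    constructor
    · rintro (_ | h1 | ⟨_, h2, _⟩)
      · exact Or.inl ⟨⟨rfl⟩, rfl⟩
      · exact Or.inr ⟨⟨_, h1⟩, rfl⟩
      · exact h2.elim
    · rintro (⟨⟨rfl⟩, rfl⟩ | ⟨⟨a, ha⟩, rfl⟩)
      · exact .nil p
      · exact .edge ha
  rw [h]
  exact (IsRat.iSup fun _ => .one).add (IsRat.iSup fun a => .letter a.1)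

theorem isRat_through [Finite A] (M : NFA A Q) (hS : S.Finite) (p q : Q) :
    IsRat (through M S p q) := by
  induction S, hS using Set.Finite.induction_on generalizing p q with
  | empty => exact isRat_through_empty M p q
  | insert _ _ ih =>
    rw [through_insert]
    exact (ih p q).add ((ih _ _).mul ((ih _ _).kstar.mul (ih _ _)))

theorem nonempty_path_iff {w : List A} :
    Nonempty (M.Path p q w) ↔ w ∈ through M Set.univ p q := by
  constructor
  · rintro ⟨h⟩
    induction h with
    | nil s => exact .nil s
    | cons t s u a x h1 _ ih => exact .cons h1 trivial ih
  · intro h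
    induction (mem_through.1 h) with
    | nil p => exact ⟨.nil p⟩
    | edge h1 => exact ⟨.cons _ _ _ _ _ h1 (.nil _)⟩
    | cons h1 _ h3 ih =>
      obtain ⟨P⟩ := ih h3
      exact ⟨.cons _ _ _ _ _ h1 P⟩

end

/-- **Γ-maps.** For every nondeterministic finite automaton over a finite alphabet `A` with a
finite state set, there exists a rational expression over `A` whose denoted language equals the
language accepted by the automaton. -/
theorem gamma_maps {A : Type} [Fintype A] {Q : Type} [Fintype Q] (M : NFA A Q) :
    ∃ E : RegularExpression A, E.matches' = M.accepts := by
  have h : M.accepts = ⨆ p : M.start, ⨆ q : M.accept, through M Set.univ p.1 q.1 := by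
    ext w
    simp [NFA.accepts_iff_exists_path, nonempty_path_iff, Language.mem_iSup]
  rw [h]
  exact IsRat.iSup fun p => IsRat.iSup fun q => isRat_through M Set.finite_univ p.1 q.1
end

section
/- Kleene's theorem: let A be a finite alphabet. A language L over A is denoted by some rational expression over A if and only if L is recognisable, that is, there exist a finite monoid N, a monoid morphism α from the free monoid A∗ to N and a subset S of N such that L = α⁻¹(S). -/
/-!
Rational implies recognisable: by induction on the expression, the language has finitely many left
quotients `{y | x ++ y ∈ L}`. The quotients of a product or a star are built from unions of
quotients of the factors (`leftQuotient_mul`, `leftQuotient_kstar`), and finitely many quotients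
have finitely many unions. By Myhill–Nerode the language is accepted by a finite deterministic
automaton, whose transition monoid recognises it.

Recognisable implies rational: `N` is viewed as the state set of the automaton in which the letter
`a` sends `s` to `s * α a`. The labels of the paths from `s` to `t` all of whose intermediate states
lie in a finite set `K` form a rational language, by induction on `K` (McNaughton–Yamada): adding a
state `k` replaces `R s t` by `R s t + R s k * (R k k)∗ * R k t` (`pathLang_insert`). For `K` the
whole of `N`, the language is the finite union of the `R 1 t` with `t ∈ S`.
-/

open Computability

namespace Kleene

/-! ### Finiteness of the set of left quotients -/

section Quotients

variable {A : Type*}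

theorem finite_quotients_add {L M : Language A} (hL : (Set.range L.leftQuotient).Finite)
    (hM : (Set.range M.leftQuotient).Finite) : (Set.range (L + M).leftQuotient).Finite := by
  refine (hL.image2 (fun P Q => P + Q) hM).subset ?_
  rintro _ ⟨x, rfl⟩
  exact ⟨_, ⟨x, rfl⟩, _, ⟨x, rfl⟩, rfl⟩

/-- A word `x ++ y` of `L * M` is cut either inside `y` or inside `x`. -/
theorem leftQuotient_mul (L M : Language A) (x : List A) :
    (L * M).leftQuotient x =
      L.leftQuotient x * M + sSup {Q | ∃ u ∈ L, ∃ v, u ++ v = x ∧ Q = M.leftQuotient v} := by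
  ext y
  rw [Language.mem_leftQuotient, Language.mem_add, Language.mem_mul, Language.mem_mul]
  constructor
  · rintro ⟨a, ha, b, hb, hab⟩
    rcases List.append_eq_append_iff.1 hab with ⟨c, rfl, rfl⟩ | ⟨c, rfl, rfl⟩
    · exact Or.inr (Set.mem_sUnion.2 ⟨_, ⟨a, ha, c, rfl, rfl⟩, hb⟩)
    · exact Or.inl ⟨c, ha, b, hb, rfl⟩
  · rintro (⟨c, hc, b, hb, rfl⟩ | h)
    · exact ⟨x ++ c, hc, b, hb, by simp⟩
    · obtain ⟨_, ⟨u, hu, v, rfl, rfl⟩, hy⟩ := Set.mem_sUnion.1 h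
      exact ⟨u, hu, v ++ y, hy, by simp⟩

theorem finite_quotients_mul {L M : Language A} (hL : (Set.range L.leftQuotient).Finite)
    (hM : (Set.range M.leftQuotient).Finite) : (Set.range (L * M).leftQuotient).Finite := by
  refine (hL.image2 (fun P (Q : Set (Language A)) => P * M + sSup Q) hM.finite_subsets).subset ?_
  rintro _ ⟨x, rfl⟩
  refine ⟨_, ⟨x, rfl⟩, _, ?_, (leftQuotient_mul L M x).symm⟩
  rintro _ ⟨u, -, v, -, rfl⟩
  exact ⟨v, rfl⟩

/-- Any cut of a nonempty product of words of `L` into `x` and `y` falls inside, or at an end of,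
one of the factors, which is `v ++ y₁` here. -/
theorem exists_straddling {L : Language A} (W : List (List A)) (hne : W ≠ [])
    (hW : ∀ w ∈ W, w ∈ L) (x y : List A) (h : x ++ y = W.flatten) :
    ∃ u ∈ L∗, ∃ v, u ++ v = x ∧ ∃ y₁, v ++ y₁ ∈ L ∧ ∃ y₂ ∈ L∗, y₁ ++ y₂ = y := by
  induction W generalizing x with
  | nil => exact absurd rfl hne
  | cons w W ih =>
    have hw : w ∈ L := hW w (by simp)
    have hW' : ∀ w ∈ W, w ∈ L := fun z hz => hW z (by simp [hz])
    rw [List.flatten_cons] at h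
    rcases List.append_eq_append_iff.1 h with ⟨c, rfl, rfl⟩ | ⟨c, rfl, hc⟩
    · exact ⟨[], Language.nil_mem_kstar L, x, rfl, c, hw, _, Language.join_mem_kstar hW', rfl⟩
    · by_cases hWe : W = []
      · subst hWe
        obtain ⟨rfl, rfl⟩ := List.append_eq_nil_iff.1 hc.symm
        exact ⟨[], Language.nil_mem_kstar L, w, by simp, [], by simpa using hw, [],
          Language.nil_mem_kstar L, rfl⟩
      · obtain ⟨u, hu, v, rfl, y₁, h₁, y₂, h₂, rfl⟩ := ih hWe hW' c hc.symm
        refine ⟨w ++ u, ?_, v, by simp, y₁, h₁, y₂, h₂, rfl⟩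
        rw [← Language.one_add_self_mul_kstar_eq_kstar]
        exact Or.inr (Language.append_mem_mul hw hu)

/-- The hypothesis on `x` is needed: `[]` need not be straddled by a factor if `L` is empty. -/
theorem leftQuotient_kstar (L : Language A) {x : List A} (hx : x ≠ []) :
    L∗.leftQuotient x =
      sSup {Q | ∃ u ∈ L∗, ∃ v, u ++ v = x ∧ Q = L.leftQuotient v} * L∗ := by
  ext y
  rw [Language.mem_leftQuotient, Language.mem_mul]
  constructor
  · intro h
    obtain ⟨W, hxy, hW⟩ := Language.mem_kstar.1 h
    have hne : W ≠ [] := by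
      rintro rfl
      simp_all
    obtain ⟨u, hu, v, hx, y₁, h₁, y₂, h₂, rfl⟩ := exists_straddling W hne hW x y hxy
    exact ⟨y₁, Set.mem_sUnion.2 ⟨_, ⟨u, hu, v, hx, rfl⟩, h₁⟩, y₂, h₂, rfl⟩
  · rintro ⟨y₁, h₁, y₂, h₂, rfl⟩
    obtain ⟨_, ⟨u, hu, v, rfl, rfl⟩, hv⟩ := Set.mem_sUnion.1 h₁
    obtain ⟨U, rfl, hU⟩ := Language.mem_kstar.1 hu
    obtain ⟨V, rfl, hV⟩ := Language.mem_kstar.1 h₂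
    have hvL : v ++ y₁ ∈ L := hv
    refine Language.mem_kstar.2 ⟨U ++ (v ++ y₁) :: V, by simp, ?_⟩
    intro z hz
    rcases List.mem_append.1 hz with hz | hz
    · exact hU z hz
    · rcases List.mem_cons.1 hz with rfl | hz
      · exact hvL
      · exact hV z hz

theorem finite_quotients_kstar {L : Language A} (hL : (Set.range L.leftQuotient).Finite) :
    (Set.range L∗.leftQuotient).Finite := by
  refine ((hL.finite_subsets.image
    (fun Q : Set (Language A) => sSup Q * L∗)).insert L∗).subset ?_
  rintro _ ⟨x, rfl⟩
  by_cases hx : x = []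
  · subst hx
    exact Or.inl rfl
  · refine Or.inr ⟨_, ?_, (leftQuotient_kstar L hx).symm⟩
    rintro _ ⟨u, -, v, -, rfl⟩
    exact ⟨v, rfl⟩

theorem finite_quotients_zero : (Set.range (0 : Language A).leftQuotient).Finite := by
  refine (Set.finite_singleton (0 : Language A)).subset ?_
  rintro _ ⟨x, rfl⟩
  rfl

theorem finite_quotients_one : (Set.range (1 : Language A).leftQuotient).Finite := by
  refine (Set.toFinite ({0, 1} : Set (Language A))).subset ?_
  rintro _ ⟨x, rfl⟩
  cases x with
  | nil => exact Or.inr rfl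
  | cons a x =>
    refine Or.inl (Language.ext fun y => ?_)
    rw [Language.mem_leftQuotient, Language.mem_one]
    simp [Language.notMem_zero]

theorem finite_quotients_char (c : A) :
    (Set.range (RegularExpression.char c).matches'.leftQuotient).Finite := by
  refine (Set.toFinite ({0, 1, (RegularExpression.char c).matches'} : Set (Language A))).subset ?_
  rintro _ ⟨x, rfl⟩
  have key : ∀ z : List A, z ∈ (RegularExpression.char c).matches' ↔ z = [c] := fun z => Iff.rfl
  match x with
  | [] => exact Or.inr (Or.inr rfl)
  | [a] =>
    by_cases h : a = c
    · refine Or.inr (Or.inl (Language.ext fun y => ?_))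
      rw [Language.mem_leftQuotient, Language.mem_one, key]
      simp [h]
    · refine Or.inl (Language.ext fun y => ?_)
      rw [Language.mem_leftQuotient, key]
      simp [h, Language.notMem_zero]
  | a :: b :: x =>
    refine Or.inl (Language.ext fun y => ?_)
    rw [Language.mem_leftQuotient, key]
    simp [Language.notMem_zero]

theorem finite_quotients_matches' (E : RegularExpression A) :
    (Set.range E.matches'.leftQuotient).Finite := by
  induction E with
  | zero => exact finite_quotients_zero
  | epsilon => exact finite_quotients_one
  | char c => exact finite_quotients_char c
  | plus P Q hP hQ => exact finite_quotients_add hP hQ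
  | comp P Q hP hQ => exact finite_quotients_mul hP hQ
  | star P hP => exact finite_quotients_kstar hP

end Quotients

/-! ### The transition monoid of an automaton -/

section TransitionMonoid

variable {A σ : Type*}

/-- The action of words on the states of `M`. Words act from left to right while composition is
written from right to left, hence the opposite monoid. -/
def transition (M : DFA A σ) : FreeMonoid A →* (Function.End σ)ᵐᵒᵖ :=
  FreeMonoid.lift fun a => MulOpposite.op fun s => M.step s a

theorem transition_apply (M : DFA A σ) (w : List A) (s : σ) :
    (transition M (FreeMonoid.ofList w)).unop s = M.evalFrom s w := by
  induction w generalizing s with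
  | nil => simp [transition]; rfl
  | cons a w ih =>
    rw [FreeMonoid.ofList_cons, map_mul, DFA.evalFrom_cons, ← ih]
    rfl

end TransitionMonoid

/-! ### Rational languages -/

section Rational

variable {A : Type*}

/-- The language `L` is denoted by some rational expression. -/
def IsRational (L : Language A) : Prop := ∃ E : RegularExpression A, E.matches' = L

theorem IsRational.zero : IsRational (0 : Language A) := ⟨0, rfl⟩

theorem IsRational.add {L M : Language A} : IsRational L → IsRational M → IsRational (L + M) := by
  rintro ⟨E, rfl⟩ ⟨F, rfl⟩
  exact ⟨E + F, rfl⟩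

theorem IsRational.mul {L M : Language A} : IsRational L → IsRational M → IsRational (L * M) := by
  rintro ⟨E, rfl⟩ ⟨F, rfl⟩
  exact ⟨E * F, rfl⟩

theorem IsRational.kstar {L : Language A} : IsRational L → IsRational L∗ := by
  rintro ⟨E, rfl⟩
  exact ⟨E.star, rfl⟩

theorem isRational_singleton (w : List A) : IsRational ({w} : Set (List A)) := by
  induction w with
  | nil => exact ⟨1, rfl⟩
  | cons a w ih =>
    obtain ⟨E, hE⟩ := ih
    refine ⟨RegularExpression.char a * E, ?_⟩
    rw [RegularExpression.matches'_mul, hE]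
    exact Set.image2_singleton

theorem isRational_of_finite {L : Set (List A)} (hL : L.Finite) : IsRational L := by
  induction L, hL using Set.Finite.induction_on with
  | empty => exact IsRational.zero
  | insert _ _ ih => exact (isRational_singleton _).add ih

theorem isRational_biUnion {ι : Type*} {T : Set ι} (hT : T.Finite) {f : ι → Set (List A)}
    (hf : ∀ i, IsRational (f i)) : IsRational (⋃ i ∈ T, f i) := by
  induction T, hT using Set.Finite.induction_on with
  | empty =>
    rw [Set.biUnion_empty]
    exact IsRational.zero
  | insert _ _ ih =>
    rw [Set.biUnion_insert]
    exact (hf _).add ih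

end Rational

/-! ### Paths with restricted intermediate states -/

section Paths

variable {A σ : Type*} {δ : σ → A → σ} {K : Set σ} {s t k : σ}

/-- `Path δ K s w t`: reading `w` from `s` in the automaton with transition function `δ` leads to
`t`, and every state visited strictly in between lies in `K`. The end points `s` and `t` are not
required to lie in `K`. -/
inductive Path (δ : σ → A → σ) (K : Set σ) : σ → List A → σ → Prop
  | nil (s : σ) : Path δ K s [] s
  | single (s : σ) (a : A) : Path δ K s [a] (δ s a)
  | cons {s t : σ} {a : A} {w : List A} :
      δ s a ∈ K → Path δ K (δ s a) w t → Path δ K s (a :: w) t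

/-- The labels of the paths from `s` to `t` with intermediate states in `K`. -/
def pathLang (δ : σ → A → σ) (K : Set σ) (s t : σ) : Language A := {w | Path δ K s w t}

theorem Path.mono {K' : Set σ} (hK : K ⊆ K') {w : List A} (h : Path δ K s w t) :
    Path δ K' s w t := by
  induction h with
  | nil s => exact .nil s
  | single s a => exact .single s a
  | cons ha _ ih => exact .cons (hK ha) ih

theorem Path.append {u v : List A} (hk : k ∈ K) (hu : Path δ K s u k) (hv : Path δ K k v t) :
    Path δ K s (u ++ v) t := by
  induction hu with
  | nil s => exact hv
  | single s a => exact .cons hk hv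
  | cons ha _ ih => exact .cons ha (ih hk hv)

theorem path_of_mem_kstar (hk : k ∈ K) {w : List A} (hw : w ∈ (pathLang δ K k k)∗) :
    Path δ K k w k := by
  obtain ⟨W, rfl, hW⟩ := Language.mem_kstar.1 hw
  clear hw
  induction W with
  | nil => exact .nil k
  | cons w W ih =>
    have hW' : ∀ y ∈ W, y ∈ pathLang δ K k k := fun y hy => hW y (by simp [hy])
    exact Path.append hk (hW w (by simp)) (ih hW')

/-- A path whose intermediate states lie in `K ∪ {k}` is cut at its visits to `k`. -/
theorem pathLang_insert (δ : σ → A → σ) (K : Set σ) (k s t : σ) :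
    pathLang δ (insert k K) s t =
      pathLang δ K s t + pathLang δ K s k * ((pathLang δ K k k)∗ * pathLang δ K k t) := by
  ext w
  rw [Language.mem_add]
  constructor
  · intro h
    change Path δ (insert k K) s w t at h
    induction h with
    | nil s => exact Or.inl (.nil s)
    | single s a => exact Or.inl (.single s a)
    | @cons s t a w ha _ ih =>
      rcases ha with rfl | ha
      · refine Or.inr (Language.append_mem_mul (a := [a]) (Path.single s a) ?_)
        rcases ih with ih | ih
        · exact Language.append_mem_mul (a := []) (Language.nil_mem_kstar _) ih
        · rw [← Language.one_add_self_mul_kstar_eq_kstar, add_mul, mul_assoc]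
          exact Or.inr ih
      · rcases ih with ih | ih
        · exact Or.inl (.cons ha ih)
        · obtain ⟨u, hu, v, hv, rfl⟩ := Language.mem_mul.1 ih
          exact Or.inr (Language.append_mem_mul (a := a :: u) (Path.cons ha hu) hv)
  · have hk : k ∈ insert k K := Set.mem_insert k K
    have hK : K ⊆ insert k K := Set.subset_insert k K
    rintro (h | h)
    · exact Path.mono hK h
    · obtain ⟨u, hu, z, hz, rfl⟩ := Language.mem_mul.1 h
      obtain ⟨v, hv, x, hx, rfl⟩ := Language.mem_mul.1 hz
      refine Path.append hk (Path.mono hK hu) (Path.append hk ?_ (Path.mono hK hx))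
      refine path_of_mem_kstar hk ?_
      obtain ⟨V, rfl, hV⟩ := Language.mem_kstar.1 hv
      exact Language.join_mem_kstar fun y hy => Path.mono hK (hV y hy)

/-- Without intermediate states only words of length at most one remain; this is where the
finiteness of the alphabet enters. -/
theorem isRational_pathLang [Finite A] (δ : σ → A → σ) (hK : K.Finite) (s t : σ) :
    IsRational (pathLang δ K s t) := by
  induction K, hK using Set.Finite.induction_on generalizing s t with
  | empty =>
    refine isRational_of_finite
      (((Set.finite_range fun a : A => [a]).insert []).subset fun w hw => ?_)
    cases hw with
    | nil => exact Or.inl rfl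
    | single _ a => exact Or.inr ⟨a, rfl⟩
    | cons ha _ => exact ha.elim
  | insert _ _ ih =>
    rw [pathLang_insert]
    exact (ih s t).add ((ih _ _).mul ((ih _ _).kstar.mul (ih _ _)))

theorem path_univ_iff {N : Type*} [Monoid N] (α : FreeMonoid A →* N) (m n : N) (w : List A) :
    Path (fun s a => s * α (FreeMonoid.of a)) Set.univ m w n ↔
      m * α (FreeMonoid.ofList w) = n := by
  constructor
  · intro h
    induction h with
    | nil s => simp
    | single s a => rw [FreeMonoid.ofList_singleton]
    | cons _ _ ih => rw [FreeMonoid.ofList_cons, map_mul, ← mul_assoc, ih]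
  · rintro rfl
    induction w generalizing m with
    | nil => simpa using Path.nil m
    | cons a w ih =>
      rw [FreeMonoid.ofList_cons, map_mul, ← mul_assoc]
      exact .cons (Set.mem_univ _) (ih _)

end Paths

end Kleene

open Kleene

/-- **Kleene's theorem.** For a finite alphabet `A`, a language `L` over `A` is denoted by some
rational expression over `A` if and only if `L` is recognisable, i.e. there exist a finite
monoid `N`, a monoid morphism `α : A∗ → N` and a subset `S ⊆ N` with `L = α⁻¹(S)`. -/
theorem kleene_theorem {A : Type} [Fintype A] (L : Language A) :
    (∃ E : RegularExpression A, E.matches' = L) ↔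
      ∃ (N : MonCat) (_ : Fintype N) (α : FreeMonoid A →* N) (S : Set N),
        ∀ w : List A, w ∈ L ↔ α (FreeMonoid.ofList w) ∈ S := by
  constructor
  · rintro ⟨E, rfl⟩
    obtain ⟨σ, _, M, hM⟩ :=
      Language.IsRegular.of_finite_range_leftQuotient (finite_quotients_matches' E)
    have : Finite (Function.End σ) := inferInstanceAs (Finite (σ → σ))
    have : Finite (Function.End σ)ᵐᵒᵖ := Finite.of_equiv _ MulOpposite.opEquiv
    -- `ULift` moves the transition monoid to the universe of `N`.
    refine ⟨MonCat.of (ULift (Function.End σ)ᵐᵒᵖ),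
      Fintype.ofFinite (ULift (Function.End σ)ᵐᵒᵖ),
      MulEquiv.ulift.symm.toMonoidHom.comp (transition M),
      {f : ULift (Function.End σ)ᵐᵒᵖ | f.down.unop M.start ∈ M.accept}, fun w => ?_⟩
    rw [← hM, DFA.mem_accepts, DFA.eval, ← transition_apply]
    rfl
  · rintro ⟨N, _, α, S, h⟩
    have hL : L = ⋃ t ∈ S, pathLang (fun s a => s * α (FreeMonoid.of a)) Set.univ 1 t := by
      refine Language.ext fun w => (h w).trans (Iff.trans ?_ Set.mem_iUnion₂.symm)
      refine ⟨fun hw => ⟨_, hw, (path_univ_iff α 1 _ w).2 (one_mul _)⟩, ?_⟩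
      rintro ⟨t, ht, hw⟩
      rw [← (path_univ_iff α 1 t w).1 hw, one_mul] at ht
      exact ht
    rw [hL]
    exact isRational_biUnion S.toFinite fun t => isRational_pathLang _ Set.finite_univ 1 t
end

section
/- Let Q be a finite type and let E be a Q×Q matrix of languages over an alphabet A. Every entry of the matrix E∗ := ⋃ₙ Eⁿ (the entrywise union of all matrix powers of E, computed in the matrix semiring over the semiring of languages) belongs to the rational closure of the set of entries of E. -/
/-!
The proof is the McNaughton–Yamada (Kleene) elimination, carried out in an arbitrary Kleene
algebra. For a list `l` of indices, `elim E l p q` stands for the labels of the paths from `p` to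
`q` whose intermediate vertices lie in `l`; eliminating one more vertex `r` replaces `M p q` by
`M p q + M p r * (M r r)∗ * M r q`. Every entry of `elim E l` is visibly a rational expression in
the entries of `E`, so it remains to identify `elim E l` with `E∗` when `l` lists all of `Q`.

No paths are needed for this. `elim_mul_elim_le` says that `elim E l` is transitive through every
vertex of `l`; as it dominates `1` and `E`, it dominates every power of `E` once `l` contains all
vertices. Conversely, `elim_le` says that `elim E l` lies below every reflexive and transitive
matrix that dominates `E`, and `E∗` is one.
-/

open Computability

/-- The rational closure of a set `S` of languages over `A`: the smallest collection of
languages containing `S`, the empty language and `{ε}`, and closed under union, concatenation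
and Kleene star. -/
inductive RationalClosure {A : Type} (S : Set (Language A)) : Language A → Prop
  | base {L : Language A} : L ∈ S → RationalClosure S L
  | zero : RationalClosure S 0
  | one : RationalClosure S 1
  | add {L K : Language A} :
      RationalClosure S L → RationalClosure S K → RationalClosure S (L + K)
  | mul {L K : Language A} :
      RationalClosure S L → RationalClosure S K → RationalClosure S (L * K)
  | star {L : Language A} : RationalClosure S L → RationalClosure S (L∗)

section Elimination

variable {Q : Type} [DecidableEq Q] {α : Type} [KleeneAlgebra α]

/-- The matrix obtained from `1 + E` by eliminating the vertices of `l`, the last one first: its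
`(p, q)` entry represents the paths from `p` to `q`, possibly empty, with all intermediate vertices
in `l`. -/
def elim (E : Matrix Q Q α) : List Q → Matrix Q Q α
  | [] => 1 + E
  | r :: l => fun p q => elim E l p q + elim E l p r * (elim E l r r)∗ * elim E l r q

lemma le_elim (E : Matrix Q Q α) (l : List Q) (p q : Q) : (1 + E) p q ≤ elim E l p q := by
  induction l with
  | nil => exact le_rfl
  | cons r l ih =>
    exact ih.trans (le_add_of_nonneg_right (by simp))

lemma one_le_elim (E : Matrix Q Q α) (l : List Q) (p : Q) : 1 ≤ elim E l p p :=
  le_trans (by simp [Matrix.add_apply]) (le_elim E l p p)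

/-- `elim E l` is transitive through the vertices that have been eliminated. -/
lemma elim_mul_elim_le (E : Matrix Q Q α) (l : List Q) {s : Q} (hs : s ∈ l) (p q : Q) :
    elim E l p s * elim E l s q ≤ elim E l p q := by
  induction l generalizing s p q with
  | nil => simp at hs
  | cons r l ih =>
    simp only [elim]
    have hone := one_le_elim E l r
    generalize elim E l = M at ih hone ⊢
    rcases List.mem_cons.1 hs with rfl | hs
    · have h1 : M p s + M p s * (M s s)∗ * M s s ≤ M p s * (M s s)∗ := by
        refine add_le (le_mul_of_one_le_right' one_le_kstar) ?_
        rw [mul_assoc]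
        gcongr
        exact kstar_mul_le_kstar
      have h2 : M s q + M s s * (M s s)∗ * M s q ≤ (M s s)∗ * M s q := by
        refine add_le (le_mul_of_one_le_left' one_le_kstar) ?_
        gcongr
        exact mul_kstar_le_kstar
      calc _ ≤ M p s * (M s s)∗ * ((M s s)∗ * M s q) := by gcongr
        _ = M p s * ((M s s)∗ * (M s s)∗) * M s q := by simp only [mul_assoc]
        _ = M p s * (M s s)∗ * M s q := by rw [kstar_mul_kstar]
        _ ≤ _ := le_add_of_nonneg_left (by simp)
    · have hle : M p r * (M r r)∗ * M r q ≤ M p q + M p r * (M r r)∗ * M r q :=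
        le_add_of_nonneg_left (by simp)
      rw [add_mul, mul_add, mul_add]
      refine add_le (add_le ?_ ?_) (add_le ?_ ?_)
      · exact (ih hs p q).trans (le_add_of_nonneg_right (by simp))
      · refine le_trans ?_ hle
        calc _ = M p s * M s r * (M r r)∗ * M r q := by simp only [mul_assoc]
          _ ≤ _ := by gcongr; exact ih hs p r
      · refine le_trans ?_ hle
        calc _ = M p r * (M r r)∗ * (M r s * M s q) := by simp only [mul_assoc]
          _ ≤ _ := by gcongr; exact ih hs r q
      · refine le_trans ?_ hle
        calc _ = M p r * ((M r r)∗ * (M r s * M s r) * (M r r)∗) * M r q := by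
              simp only [mul_assoc]
          _ ≤ M p r * ((M r r)∗ * M r r * (M r r)∗) * M r q := by
              gcongr; exact ih hs r r
          _ ≤ M p r * ((M r r)∗ * (M r r)∗) * M r q := by
              gcongr; exact kstar_mul_le_kstar
          _ = M p r * (M r r)∗ * M r q := by rw [kstar_mul_kstar]

/-- `elim E l` lies below every reflexive transitive matrix that dominates `E`. -/
lemma elim_le (E X : Matrix Q Q α) (hE : ∀ p q, E p q ≤ X p q) (hone : ∀ p, 1 ≤ X p p)
    (hmul : ∀ p s q, X p s * X s q ≤ X p q) (l : List Q) (p q : Q) : elim E l p q ≤ X p q := by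
  induction l generalizing p q with
  | nil =>
    refine add_le ?_ (hE p q)
    by_cases h : p = q
    · subst h; simpa using hone p
    · simp [Matrix.one_apply_ne h]
  | cons r l ih =>
    refine add_le (ih p q) ?_
    have hstar : (X r r)∗ ≤ X r r := kstar_le_of_mul_le_left (hone r) (hmul r r r)
    calc _ ≤ X p r * X r r * X r q := by
          gcongr
          · exact ih p r
          · exact (kstar_mono (ih r r)).trans hstar
          · exact ih r q
      _ ≤ X p r * X r q := by gcongr; exact hmul p r r
      _ ≤ X p q := hmul p r q

lemma pow_le_elim [Fintype Q] (E : Matrix Q Q α) (l : List Q) (hl : ∀ s, s ∈ l) (n : ℕ)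
    (p q : Q) : (E ^ n) p q ≤ elim E l p q := by
  induction n generalizing p q with
  | zero =>
    rw [pow_zero]
    exact le_trans (le_add_of_nonneg_right (by simp)) (le_elim E l p q)
  | succ n ih =>
    rw [pow_succ, Matrix.mul_apply]
    refine Finset.sum_induction _ (· ≤ elim E l p q) (fun _ _ => add_le) (by simp) fun s _ => ?_
    refine le_trans ?_ (elim_mul_elim_le E l (hl s) p q)
    gcongr
    · exact ih p s
    · exact le_trans (le_add_of_nonneg_left (by simp)) (le_elim E l s q)

end Elimination

lemma rationalClosure_elim {A Q : Type} [DecidableEq Q] (E : Matrix Q Q (Language A))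
    (l : List Q) (p q : Q) :
    RationalClosure (Set.range fun pq : Q × Q => E pq.1 pq.2) (elim E l p q) := by
  induction l generalizing p q with
  | nil =>
    refine .add ?_ (.base ⟨(p, q), rfl⟩)
    by_cases h : p = q
    · subst h; simpa using .one
    · simpa [Matrix.one_apply_ne h] using .zero
  | cons r l ih => exact .add (ih p q) (.mul (.mul (ih p r) (.star (ih r r))) (ih r q))

/-- Every entry of the matrix `E∗ := ⋃ₙ Eⁿ` (entrywise union of all matrix powers of `E`,
computed in the matrix semiring over the semiring of languages) belongs to the rational closure
of the set of entries of `E`. -/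
theorem star_matrix_entries_rational {A : Type} {Q : Type} [Fintype Q] [DecidableEq Q]
    (E : Matrix Q Q (Language A)) (p q : Q) :
    RationalClosure (Set.range fun pq : Q × Q => E pq.1 pq.2)
      (⨆ n : ℕ, (E ^ n) p q) := by
  have key : ⨆ n : ℕ, (E ^ n) p q = elim E Finset.univ.toList p q := by
    apply le_antisymm
    · exact iSup_le fun n => pow_le_elim E _ (by simp) n p q
    · refine elim_le E (fun p q => ⨆ n : ℕ, (E ^ n) p q) (fun p q => ?_) (fun p => ?_)
        (fun p s q => ?_) _ p q
      · exact le_iSup_of_le 1 (by rw [pow_one])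
      · exact le_iSup_of_le 0 (by simp)
      · simp only [Language.iSup_mul, Language.mul_iSup]
        refine iSup_le fun m => iSup_le fun n => ?_
        refine le_iSup_of_le (n + m) ?_
        rw [pow_add, Matrix.mul_apply]
        exact Finset.single_le_sum (f := fun s => (E ^ n) p s * (E ^ m) s q)
          (fun _ _ => by simp) (Finset.mem_univ s)
  rw [key]
  exact rationalClosure_elim E _ p q
end

section
/- Standard (Glushkov) automaton: for every rational expression E over an alphabet A, there exists a nondeterministic finite automaton over A whose state set is finite of cardinality exactly ℓ(E) + 1, which has a unique initial state i, in which i is the target of no transition (i ∉ step q a for all states q and letters a), and whose accepted language equals ⟦E⟧. -/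
/-!
The states of the Glushkov automaton are one initial state together with the letter occurrences
(positions) of the expression, so an automaton whose initial state has no incoming transition is
determined by its positions, the transitions leaving the initial state, the transitions between
positions, the final positions, and whether the empty word is accepted. This is the structure
`PosAut`; its positions are disjointly added under `+` and `·`, and kept under `∗`, which gives the
count `ℓ(E)`.

For a product, a final position of the left factor also gets the transitions which leave the initial
state of the right factor, and the words accepted from a left position `p` are exactly the `u ++ v`
with `u` accepted from `p` and `v` in the right language (`PosAut.acc_comp_inl`). For a star, final
positions get the transitions leaving the initial state of the same automaton, and the words
accepted from `p` become the `u ++ v` with `u` formerly accepted from `p` and `v` in the star of the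
language (`PosAut.acc_star`). Finally `PosAut.toNFA` adds the initial state back.
-/

/-- The literal length of a rational expression: the number of occurrences of letters in it. -/
def litLength {A : Type} : RegularExpression A → ℕ
  | RegularExpression.zero => 0
  | RegularExpression.epsilon => 0
  | RegularExpression.char _ => 1
  | RegularExpression.plus P Q => litLength P + litLength Q
  | RegularExpression.comp P Q => litLength P + litLength Q
  | RegularExpression.star P => litLength P

/-- A standard automaton with its initial state left implicit; `P` is the type of the other
states. -/
structure PosAut (A P : Type) where
  /-- `init a q`: there is a transition labelled `a` from the implicit initial state to `q`. -/
  init : A → P → Prop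
  /-- `trans p a q`: there is a transition from `p` to `q` labelled `a`. -/
  trans : P → A → P → Prop
  /-- The accepting states other than the initial one. -/
  final : P → Prop
  /-- Whether the initial state is accepting. -/
  nullable : Prop

namespace PosAut

variable {A P P' : Type}

/-- The words labelling a computation from the state `p` to a final state. -/
def Acc (M : PosAut A P) : P → List A → Prop
  | p, [] => M.final p
  | p, a :: x => ∃ q, M.trans p a q ∧ M.Acc q x

/-- The words labelling a computation from the implicit initial state to a final state. -/
def Lang (M : PosAut A P) : List A → Prop
  | [] => M.nullable
  | a :: x => ∃ q, M.init a q ∧ M.Acc q x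

/-- The union: both implicit initial states are merged. -/
def plus (M : PosAut A P) (N : PosAut A P') : PosAut A (P ⊕ P') where
  init a := Sum.elim (M.init a) (N.init a)
  trans
    | .inl p, a, .inl q => M.trans p a q
    | .inr p, a, .inr q => N.trans p a q
    | _, _, _ => False
  final := Sum.elim M.final N.final
  nullable := M.nullable ∨ N.nullable

/-- The product: the accepting states of `M`, its initial state included, get the transitions
leaving the initial state of `N`. -/
def comp (M : PosAut A P) (N : PosAut A P') : PosAut A (P ⊕ P') where
  init a := Sum.elim (M.init a) (fun q => M.nullable ∧ N.init a q)
  trans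
    | .inl p, a, .inl q => M.trans p a q
    | .inl p, a, .inr q => M.final p ∧ N.init a q
    | .inr p, a, .inr q => N.trans p a q
    | .inr _, _, .inl _ => False
  final := Sum.elim (fun p => M.final p ∧ N.nullable) N.final
  nullable := M.nullable ∧ N.nullable

/-- The star: the accepting states get the transitions leaving the initial state, which becomes
accepting. -/
def star (M : PosAut A P) : PosAut A P where
  init := M.init
  trans p a q := M.trans p a q ∨ M.final p ∧ M.init a q
  final := M.final
  nullable := True

theorem acc_plus_inl (M : PosAut A P) (N : PosAut A P') (p : P) (x : List A) :
    (M.plus N).Acc (.inl p) x ↔ M.Acc p x := by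
  induction x generalizing p with
  | nil => simp [Acc, plus]
  | cons a x ih => simp only [Acc, Sum.exists, ih]; simp [plus]

theorem acc_plus_inr (M : PosAut A P) (N : PosAut A P') (p : P') (x : List A) :
    (M.plus N).Acc (.inr p) x ↔ N.Acc p x := by
  induction x generalizing p with
  | nil => simp [Acc, plus]
  | cons a x ih => simp only [Acc, Sum.exists, ih]; simp [plus]

theorem lang_plus (M : PosAut A P) (N : PosAut A P') (x : List A) :
    (M.plus N).Lang x ↔ M.Lang x ∨ N.Lang x := by
  cases x with
  | nil => simp [Lang, plus]
  | cons a x => simp only [Lang, Sum.exists, acc_plus_inl, acc_plus_inr]; simp [plus]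

theorem acc_comp_inr (M : PosAut A P) (N : PosAut A P') (p : P') (x : List A) :
    (M.comp N).Acc (.inr p) x ↔ N.Acc p x := by
  induction x generalizing p with
  | nil => simp [Acc, comp]
  | cons a x ih => simp only [Acc, Sum.exists, ih]; simp [comp]

theorem acc_comp_inl (M : PosAut A P) (N : PosAut A P') (p : P) (x : List A) :
    (M.comp N).Acc (.inl p) x ↔ ∃ u v, u ++ v = x ∧ M.Acc p u ∧ N.Lang v := by
  induction x generalizing p with
  | nil => simp [Acc, comp, Lang]
  | cons a x ih =>
    simp only [Acc, Sum.exists, ih, acc_comp_inr]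
    constructor
    · rintro (⟨q, hq, u, v, rfl, hu, hv⟩ | ⟨q, ⟨hp, hq⟩, hx⟩)
      · exact ⟨a :: u, v, rfl, ⟨q, hq, hu⟩, hv⟩
      · exact ⟨[], a :: x, rfl, hp, q, hq, hx⟩
    · rintro ⟨_ | ⟨b, u⟩, v, h, hu, hv⟩
      · obtain rfl : v = a :: x := h
        obtain ⟨q, hq, hx⟩ := hv
        exact Or.inr ⟨q, ⟨hu, hq⟩, hx⟩
      · obtain ⟨rfl, rfl⟩ := List.cons.inj h
        obtain ⟨q, hq, hx⟩ := hu
        exact Or.inl ⟨q, hq, u, v, rfl, hx, hv⟩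

theorem lang_comp (M : PosAut A P) (N : PosAut A P') (x : List A) :
    (M.comp N).Lang x ↔ ∃ u v, u ++ v = x ∧ M.Lang u ∧ N.Lang v := by
  cases x with
  | nil => simp [Lang, comp]
  | cons a x =>
    simp only [Lang, Sum.exists, acc_comp_inl, acc_comp_inr]
    constructor
    · rintro (⟨q, hq, u, v, rfl, hu, hv⟩ | ⟨q, ⟨hn, hq⟩, hx⟩)
      · exact ⟨a :: u, v, rfl, ⟨q, hq, hu⟩, hv⟩
      · exact ⟨[], a :: x, rfl, hn, q, hq, hx⟩
    · rintro ⟨_ | ⟨b, u⟩, v, h, hu, hv⟩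
      · obtain rfl : v = a :: x := h
        obtain ⟨q, hq, hx⟩ := hv
        exact Or.inr ⟨q, ⟨hu, hq⟩, hx⟩
      · obtain ⟨rfl, rfl⟩ := List.cons.inj h
        obtain ⟨q, hq, hx⟩ := hu
        exact Or.inl ⟨q, hq, u, v, rfl, hx, hv⟩

/-- A word accepted from `p`, followed by nonempty words of the language, is accepted from `p` by
the star automaton: each final position reached can read the first letter of the next factor. -/
theorem acc_star_append (M : PosAut A P) (S : List (List A))
    (hS : ∀ y ∈ S, M.Lang y ∧ y ≠ []) (p : P) (u : List A) (hu : M.Acc p u) :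
    M.star.Acc p (u ++ S.flatten) := by
  induction S generalizing p u with
  | nil =>
    induction u generalizing p with
    | nil => exact hu
    | cons a u ih =>
      obtain ⟨q, hq, hx⟩ := hu
      exact ⟨q, Or.inl hq, ih q hx⟩
  | cons s S ihS =>
    induction u generalizing p with
    | nil =>
      obtain ⟨hs, hne⟩ := hS s (by simp)
      obtain _ | ⟨a, s⟩ := s
      · exact absurd rfl hne
      · obtain ⟨q, hq, hx⟩ := hs
        exact ⟨q, Or.inr ⟨hu, hq⟩, ihS (fun y hy => hS y (by simp [hy])) q s hx⟩
    | cons a u ih =>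
      obtain ⟨q, hq, hx⟩ := hu
      exact ⟨q, Or.inl hq, ih q hx⟩

open Computability in
theorem acc_star (M : PosAut A P) (L : Language A) (hL : ∀ x, M.Lang x ↔ x ∈ L) (p : P)
    (x : List A) :
    M.star.Acc p x ↔ ∃ u v, u ++ v = x ∧ M.Acc p u ∧ v ∈ L∗ := by
  constructor
  · intro h
    induction x generalizing p with
    | nil => exact ⟨[], [], rfl, h, Language.nil_mem_kstar L⟩
    | cons a x ih =>
      obtain ⟨q, hq, hx⟩ := h
      obtain ⟨u, v, rfl, hu, hv⟩ := ih q hx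
      obtain hq | ⟨hp, hq⟩ := hq
      · exact ⟨a :: u, v, rfl, ⟨q, hq, hu⟩, hv⟩
      · refine ⟨[], a :: u ++ v, rfl, hp, ?_⟩
        have hau : a :: u ∈ L := (hL _).1 ⟨q, hq, hu⟩
        exact mul_kstar_le_kstar (a := L) (Language.append_mem_mul hau hv)
  · rintro ⟨u, v, rfl, hu, hv⟩
    obtain ⟨S, rfl, hS⟩ := Language.mem_kstar_iff_exists_nonempty.1 hv
    exact M.acc_star_append S (fun y hy => ⟨(hL y).2 (hS y hy).1, (hS y hy).2⟩) p u hu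

open Computability in
theorem lang_star (M : PosAut A P) (L : Language A) (hL : ∀ x, M.Lang x ↔ x ∈ L) (x : List A) :
    M.star.Lang x ↔ x ∈ L∗ := by
  cases x with
  | nil => exact ⟨fun _ => Language.nil_mem_kstar L, fun _ => trivial⟩
  | cons a x =>
    simp only [Lang, M.acc_star L hL]
    constructor
    · rintro ⟨q, hq, u, v, rfl, hu, hv⟩
      have hau : a :: u ∈ L := (hL _).1 ⟨q, hq, hu⟩
      exact mul_kstar_le_kstar (a := L) (Language.append_mem_mul hau hv)
    · intro h
      obtain ⟨S, hx, hS⟩ := Language.mem_kstar_iff_exists_nonempty.1 h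
      obtain _ | ⟨s, S⟩ := S
      · simp at hx
      · obtain ⟨hs, hne⟩ := hS s (by simp)
        obtain _ | ⟨b, s⟩ := s
        · exact absurd rfl hne
        · obtain ⟨rfl, rfl⟩ := List.cons.inj hx
          obtain ⟨q, hq, hu⟩ := (hL _).2 hs
          exact ⟨q, hq, s, S.flatten, rfl, hu, Language.mem_kstar_iff_exists_nonempty.2
            ⟨S, rfl, fun y hy => hS y (by simp [hy])⟩⟩

/-- The automaton with its initial state `none` made explicit. -/
def toNFA (M : PosAut A P) : NFA A (Option P) where
  step
    | none, a => {r | ∃ q, r = some q ∧ M.init a q}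
    | some p, a => {r | ∃ q, r = some q ∧ M.trans p a q}
  start := {none}
  accept := {r | r.elim M.nullable M.final}

theorem mem_acceptsFrom_toNFA (M : PosAut A P) (x : List A) (S : Set (Option P)) :
    x ∈ M.toNFA.acceptsFrom S ↔ ∃ s ∈ S, s.elim (M.Lang x) (fun p => M.Acc p x) := by
  induction x generalizing S with
  | nil => simp only [NFA.nil_mem_acceptsFrom]; rfl
  | cons a x ih =>
    simp only [NFA.cons_mem_acceptsFrom, ih, NFA.mem_stepSet]
    constructor
    · rintro ⟨s, ⟨_ | p, ht, q, rfl, hq⟩, hs⟩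
      · exact ⟨none, ht, q, hq, hs⟩
      · exact ⟨some p, ht, q, hq, hs⟩
    · rintro ⟨_ | p, ht, q, hq, hs⟩
      · exact ⟨some q, ⟨none, ht, q, rfl, hq⟩, hs⟩
      · exact ⟨some q, ⟨some p, ht, q, rfl, hq⟩, hs⟩

end PosAut

theorem exists_posAut {A : Type} (E : RegularExpression A) :
    ∃ (P : Type) (fP : Fintype P) (M : PosAut A P),
      @Fintype.card P fP = litLength E ∧ ∀ x, M.Lang x ↔ x ∈ E.matches' := by
  induction E with
  | zero =>
    refine ⟨Empty, inferInstance, ⟨fun _ _ => False, fun _ _ _ => False, fun _ => False, False⟩,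
      rfl, fun x => ?_⟩
    change _ ↔ x ∈ (0 : Language A)
    cases x <;> simp [PosAut.Lang, Language.notMem_zero]
  | epsilon =>
    refine ⟨Empty, inferInstance, ⟨fun _ _ => False, fun _ _ _ => False, fun _ => False, True⟩,
      rfl, fun x => ?_⟩
    change _ ↔ x ∈ (1 : Language A)
    cases x <;> simp [PosAut.Lang, Language.mem_one]
  | char a =>
    refine ⟨Unit, inferInstance, ⟨fun b _ => b = a, fun _ _ _ => False, fun _ => True, False⟩,
      rfl, fun x => ?_⟩
    change _ ↔ x = [a]
    obtain _ | ⟨b, _ | ⟨c, x⟩⟩ := x <;> simp [PosAut.Lang, PosAut.Acc]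
  | plus E F ihE ihF =>
    obtain ⟨P, fP, M, hM, hE⟩ := ihE
    obtain ⟨P', fP', N, hN, hF⟩ := ihF
    refine ⟨P ⊕ P', inferInstance, M.plus N, ?_, fun x => ?_⟩
    · rw [Fintype.card_sum, hM, hN]; rfl
    · rw [PosAut.lang_plus, hE, hF]; rfl
  | comp E F ihE ihF =>
    obtain ⟨P, fP, M, hM, hE⟩ := ihE
    obtain ⟨P', fP', N, hN, hF⟩ := ihF
    refine ⟨P ⊕ P', inferInstance, M.comp N, ?_, fun x => ?_⟩
    · rw [Fintype.card_sum, hM, hN]; rfl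
    · change _ ↔ x ∈ E.matches' * F.matches'
      simp only [PosAut.lang_comp, hE, hF, Language.mem_mul]
      grind
  | star E ihE =>
    obtain ⟨P, fP, M, hM, hE⟩ := ihE
    exact ⟨P, fP, M.star, hM, M.lang_star _ hE⟩

/-- **Standard (Glushkov) automaton.** For every rational expression `E` over `A`, there exists
an NFA over `A` whose state set is finite of cardinality exactly `ℓ(E) + 1`, with a unique
initial state `i` which is the target of no transition, and accepting exactly `⟦E⟧`. -/
theorem standard_automaton {A : Type} (E : RegularExpression A) :
    ∃ (Q : Type) (fQ : Fintype Q) (M : NFA A Q) (i : Q),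
      @Fintype.card Q fQ = litLength E + 1 ∧
      M.start = {i} ∧
      (∀ (q : Q) (a : A), i ∉ M.step q a) ∧
      M.accepts = E.matches' := by
  obtain ⟨P, fP, M, hM, hE⟩ := exists_posAut E
  refine ⟨Option P, inferInstance, M.toNFA, none, ?_, rfl, ?_, ?_⟩
  · rw [Fintype.card_option, hM]
  · rintro (_ | p) a ⟨q, hq, _⟩ <;> cases hq
  · ext x
    rw [NFA.accepts_eq_acceptsFrom_start, M.mem_acceptsFrom_toNFA, ← hE]
    simp [PosAut.toNFA]
end

section
/- Star-normal form: for every rational expression E over an alphabet A, there exists a rational expression F over A in star-normal form such that ⟦F⟧ = ⟦E⟧ and ℓ(F) ≤ ℓ(E). -/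
/-- A rational expression is in star-normal form if for every subexpression of the form `G∗`
occurring in it, the empty word does not belong to `⟦G⟧`. -/
inductive InStarNormalForm {A : Type} : RegularExpression A → Prop
  | zero : InStarNormalForm 0
  | epsilon : InStarNormalForm 1
  | char (a : A) : InStarNormalForm (RegularExpression.char a)
  | plus {P Q : RegularExpression A} :
      InStarNormalForm P → InStarNormalForm Q → InStarNormalForm (P + Q)
  | comp {P Q : RegularExpression A} :
      InStarNormalForm P → InStarNormalForm Q → InStarNormalForm (P * Q)
  | star {P : RegularExpression A} :
      InStarNormalForm P → ([] : List A) ∉ P.matches' →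
      InStarNormalForm (RegularExpression.star P)

/-- Two elements of a Kleene algebra that lie below each other's star have the same star. -/
theorem kstar_eq_of_le_kstar {K : Type*} [KleeneAlgebra K] {a b : K}
    (hab : a ≤ KStar.kstar b) (hba : b ≤ KStar.kstar a) : KStar.kstar a = KStar.kstar b :=
  le_antisymm (by simpa using kstar_mono hab) (by simpa using kstar_mono hba)

theorem kstar_add_congr {K : Type*} [KleeneAlgebra K] {a b c d : K}
    (hac : KStar.kstar a = KStar.kstar c) (hbd : KStar.kstar b = KStar.kstar d) :
    KStar.kstar (a + b) = KStar.kstar (c + d) := by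
  -- Each summand lies below its own star, hence below the star of the other sum.
  have key : ∀ {x y z w : K}, KStar.kstar x = KStar.kstar z → KStar.kstar y = KStar.kstar w →
      x + y ≤ KStar.kstar (z + w) := by
    intro x y z w hx hy
    refine add_le ?_ ?_
    · exact (le_kstar.trans_eq hx).trans (kstar_mono le_self_add)
    · exact (le_kstar.trans_eq hy).trans (kstar_mono le_add_self)
  exact kstar_eq_of_le_kstar (key hac hbd) (key hac.symm hbd.symm)

/-- Under a star, a product of two elements above `1` may be replaced by their sum: this is what
allows the empty word to be removed from a starred product of nullable expressions. -/
theorem kstar_mul_eq_kstar_add {K : Type*} [KleeneAlgebra K] {a b : K}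
    (ha : 1 ≤ a) (hb : 1 ≤ b) : KStar.kstar (a * b) = KStar.kstar (a + b) := by
  refine kstar_eq_of_le_kstar ?_ ?_
  · calc a * b ≤ KStar.kstar (a + b) * KStar.kstar (a + b) :=
          mul_le_mul' (le_self_add.trans le_kstar) (le_add_self.trans le_kstar)
      _ = KStar.kstar (a + b) := kstar_mul_kstar _
  · exact (add_le (le_mul_of_one_le_right' hb) (le_mul_of_one_le_left' ha)).trans le_kstar

theorem Language.one_le_of_nil_mem {A : Type} {l : Language A} (h : ([] : List A) ∈ l) :
    1 ≤ l := by
  intro x hx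
  rw [(Language.mem_one x).1 hx]
  exact h

/-- The strengthened induction hypothesis: besides a star-normal form `F` of `E`, there is an
expression `G` in star-normal form that does not accept the empty word and has the same star as
`E`. Both are no longer than `E`. -/
theorem exists_star_normal_form_and_body {A : Type} (E : RegularExpression A) :
    (∃ F : RegularExpression A,
      InStarNormalForm F ∧ F.matches' = E.matches' ∧ litLength F ≤ litLength E) ∧
    ∃ G : RegularExpression A,
      InStarNormalForm G ∧ ([] : List A) ∉ G.matches' ∧
        KStar.kstar G.matches' = KStar.kstar E.matches' ∧ litLength G ≤ litLength E := by
  induction E with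
  | zero =>
    exact ⟨⟨0, .zero, rfl, le_rfl⟩, 0, .zero, Language.notMem_zero _, rfl, le_rfl⟩
  | epsilon =>
    refine ⟨⟨1, .epsilon, rfl, le_rfl⟩, 0, .zero, Language.notMem_zero _, ?_, le_rfl⟩
    change KStar.kstar (0 : Language A) = KStar.kstar (1 : Language A)
    rw [kstar_zero, kstar_one]
  | char a =>
    refine ⟨⟨.char a, .char a, rfl, le_rfl⟩, .char a, .char a, ?_, rfl, le_rfl⟩
    intro h
    exact List.cons_ne_nil a [] (Set.mem_singleton_iff.1 h).symm
  | plus P Q ihP ihQ =>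
    obtain ⟨⟨F₁, hF₁, eF₁, lF₁⟩, G₁, hG₁, nG₁, eG₁, lG₁⟩ := ihP
    obtain ⟨⟨F₂, hF₂, eF₂, lF₂⟩, G₂, hG₂, nG₂, eG₂, lG₂⟩ := ihQ
    refine ⟨⟨F₁ + F₂, .plus hF₁ hF₂, ?_, add_le_add lF₁ lF₂⟩,
      G₁ + G₂, .plus hG₁ hG₂, ?_, kstar_add_congr eG₁ eG₂, add_le_add lG₁ lG₂⟩
    · change F₁.matches' + F₂.matches' = P.matches' + Q.matches'
      rw [eF₁, eF₂]
    · exact fun h => h.elim nG₁ nG₂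
  | comp P Q ihP ihQ =>
    obtain ⟨⟨F₁, hF₁, eF₁, lF₁⟩, G₁, hG₁, nG₁, eG₁, lG₁⟩ := ihP
    obtain ⟨⟨F₂, hF₂, eF₂, lF₂⟩, G₂, hG₂, nG₂, eG₂, lG₂⟩ := ihQ
    have eF : (F₁ * F₂).matches' = (P * Q).matches' := by
      rw [RegularExpression.matches'_mul, RegularExpression.matches'_mul, eF₁, eF₂]
    refine ⟨⟨F₁ * F₂, .comp hF₁ hF₂, eF, add_le_add lF₁ lF₂⟩, ?_⟩
    by_cases hPQ : ([] : List A) ∈ P.matches' ∧ ([] : List A) ∈ Q.matches'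
    · refine ⟨G₁ + G₂, .plus hG₁ hG₂, fun h => h.elim nG₁ nG₂, ?_, add_le_add lG₁ lG₂⟩
      exact (kstar_add_congr eG₁ eG₂).trans (kstar_mul_eq_kstar_add
        (Language.one_le_of_nil_mem hPQ.1) (Language.one_le_of_nil_mem hPQ.2)).symm
    · refine ⟨F₁ * F₂, .comp hF₁ hF₂, ?_, congrArg KStar.kstar eF, add_le_add lF₁ lF₂⟩
      rw [eF, RegularExpression.matches'_mul, Language.mem_mul]
      rintro ⟨u, hu, v, hv, huv⟩
      obtain ⟨rfl, rfl⟩ := List.append_eq_nil_iff.1 huv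
      exact hPQ ⟨hu, hv⟩
  | star P ih =>
    obtain ⟨-, G, hG, nG, eG, lG⟩ := ih
    exact ⟨⟨.star G, .star hG nG, eG, lG⟩, G, hG, nG, eG.trans (kstar_idem _).symm, lG⟩

/-- **Star-normal form.** For every rational expression `E` over `A`, there exists a rational
expression `F` in star-normal form with `⟦F⟧ = ⟦E⟧` and `ℓ(F) ≤ ℓ(E)`. -/
theorem star_normal_form {A : Type} (E : RegularExpression A) :
    ∃ F : RegularExpression A,
      InStarNormalForm F ∧ F.matches' = E.matches' ∧ litLength F ≤ litLength E :=
  (exists_star_normal_form_and_body E).1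
end

section
/- Partial derivatives compute quotients: for every rational expression E over an alphabet A with decidable equality and every nonempty word u over A, the union of the languages denoted by the partial derivatives of E with respect to u equals the left quotient of ⟦E⟧ by u: ⋃_{F ∈ ∂ᵤE} ⟦F⟧ = u⁻¹⟦E⟧. -/
/-!
Antimirov's partial derivatives split Brzozowski's derivative `RegularExpression.deriv` into a set
of summands: both follow the same recursion, except that the sum introduced at a product becomes
a union, and products distribute over unions of languages. Hence the partial derivatives by a
letter `a` jointly denote the language of the Brzozowski derivative. That language is `a⁻¹⟦E⟧`,
because Mathlib's matcher `rmatch`, which differentiates by one letter at a time, is correct.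
The claim for words follows by induction on the word, for all expressions at once; it also holds
for the empty word, where the set of derivatives is `{E}`.
-/

variable {A : Type} [DecidableEq A]

/-- The Antimirov partial derivative of a rational expression with respect to a letter:
`∂ₐ0 = ∂ₐ1 = ∅`; `∂ₐb = {1}` if `b = a` and `∅` otherwise; `∂ₐ(E+F) = ∂ₐE ∪ ∂ₐF`;
`∂ₐ(E·F) = (∂ₐE)·F ∪ ∂ₐF` if `ε ∈ ⟦E⟧` and `(∂ₐE)·F` otherwise; `∂ₐ(E∗) = (∂ₐE)·E∗`. -/
def pderiv (a : A) : RegularExpression A → Set (RegularExpression A)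
  | RegularExpression.zero => ∅
  | RegularExpression.epsilon => ∅
  | RegularExpression.char b => if b = a then {1} else ∅
  | RegularExpression.plus E F => pderiv a E ∪ pderiv a F
  | RegularExpression.comp E F =>
      if E.matchEpsilon then (fun G => G * F) '' pderiv a E ∪ pderiv a F
      else (fun G => G * F) '' pderiv a E
  | RegularExpression.star E => (fun G => G * RegularExpression.star E) '' pderiv a E

/-- The Antimirov partial derivative with respect to a word, iterating `pderiv`
(with `∂_ε E = {E}`). -/
def pderivWord : List A → RegularExpression A → Set (RegularExpression A)
  | [], E => {E}
  | a :: u, E => ⋃ F ∈ pderiv a E, pderivWord u F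

/-- The set of derived terms of `E`: `E` together with all partial derivatives of `E` with
respect to nonempty words. -/
def derivedTerms (E : RegularExpression A) : Set (RegularExpression A) :=
  {E} ∪ ⋃ (u : List A) (_ : u ≠ []), pderivWord u E

/-- The Brzozowski derivative denotes the left quotient by a letter. -/
theorem mem_matches'_deriv (E : RegularExpression A) (a : A) (v : List A) :
    v ∈ (E.deriv a).matches' ↔ a :: v ∈ E.matches' := by
  rw [← RegularExpression.rmatch_iff_matches', ← RegularExpression.rmatch_iff_matches']
  rfl

/-- The partial derivatives of `E` by `a` jointly denote the language of the Brzozowski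
derivative of `E` by `a`. -/
theorem mem_matches'_deriv_iff_exists_pderiv (a : A) (E : RegularExpression A) (v : List A) :
    v ∈ (E.deriv a).matches' ↔ ∃ F ∈ pderiv a E, v ∈ F.matches' := by
  -- Right multiplication by a fixed expression preserves the equality of languages.
  have comp_right (E F : RegularExpression A)
      (ih : ∀ v, v ∈ (E.deriv a).matches' ↔ ∃ G ∈ pderiv a E, v ∈ G.matches') (v : List A) :
      v ∈ (E.deriv a * F).matches' ↔
        ∃ G ∈ (fun G => G * F) '' pderiv a E, v ∈ G.matches' := by
    simp only [RegularExpression.matches'_mul, Language.mem_mul, Set.exists_mem_image, ih]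
    grind
  induction E generalizing v with
  | zero => simp [RegularExpression.deriv, pderiv, Language.notMem_zero]
  | epsilon => simp [RegularExpression.deriv, pderiv, Language.notMem_zero]
  | char b =>
    by_cases h : b = a <;> simp [RegularExpression.deriv, pderiv, h, Language.notMem_zero]
  | plus E F ihE ihF =>
    change v ∈ (E.deriv a + F.deriv a).matches' ↔ _
    simp only [RegularExpression.matches'_add, Language.mem_add, ihE, ihF, pderiv, Set.mem_union,
      or_and_right, exists_or]
  | comp E F ihE ihF =>
    by_cases h : E.matchEpsilon
    · simp only [RegularExpression.deriv, pderiv, h, if_true, RegularExpression.matches'_add,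
        Language.mem_add, comp_right E F ihE, ihF, Set.mem_union, or_and_right, exists_or]
    · simpa only [RegularExpression.deriv, pderiv, h, Bool.false_eq_true, if_false] using comp_right E F ihE v
  | star E ihE => exact comp_right E (RegularExpression.star E) ihE v

theorem exists_mem_pderivWord_iff (u : List A) (E : RegularExpression A) (v : List A) :
    (∃ F ∈ pderivWord u E, v ∈ F.matches') ↔ u ++ v ∈ E.matches' := by
  induction u generalizing E with
  | nil => simp [pderivWord]
  | cons a u ih =>
    rw [List.cons_append, ← mem_matches'_deriv, mem_matches'_deriv_iff_exists_pderiv]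
    simp only [← ih, pderivWord, Set.mem_iUnion]
    grind

/-- **Partial derivatives compute quotients.** For every rational expression `E` over `A` and
every nonempty word `u`, the union of the languages denoted by the partial derivatives of `E`
with respect to `u` equals the left quotient of `⟦E⟧` by `u`. -/
theorem pderiv_matches_quotient (E : RegularExpression A) (u : List A) (hu : u ≠ []) :
    (⋃ F ∈ pderivWord u E, (F.matches' : Set (List A))) =
      {v : List A | u ++ v ∈ E.matches'} := by
  ext v
  refine Set.mem_iUnion₂.trans (Iff.trans ?_ (exists_mem_pderivWord_iff u E v))
  exact exists_congr fun F => exists_prop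
end

section
/- Derived-term (Antimirov) automaton: let A be an alphabet with decidable equality and let E be a rational expression over A. Consider the nondeterministic automaton whose states are the rational expressions over A, whose transitions are F →a→ F' exactly when F' ∈ ∂ₐF, whose unique initial state is E, and whose accepting states are the expressions F with ε ∈ ⟦F⟧. The language accepted by this automaton equals ⟦E⟧. -/
/-!
A word `a :: u` lies in `⟦E⟧` exactly when `u` lies in `⟦F⟧` for some `F ∈ ∂ₐE`
(`cons_mem_matches'_iff`). This follows from Mathlib's correctness theorem for the Brzozowski
derivative, because the partial derivatives of `E` by `a` denote languages whose union is the
language of the Brzozowski derivative (`mem_matches'_deriv_iff`). The automaton satisfies the same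
recursion, and its accepting states are chosen so that the two sides agree on the empty word.
Induction on the word, for an arbitrary set of current states, gives the equality.
-/

variable {A : Type} [DecidableEq A]

/-- Antimirov's partial derivatives split the Brzozowski derivative: the languages of the terms in
`∂ₐE` have union `⟦E.deriv a⟧`. Both are defined by the same recursion, and multiplying on the
right by a language distributes over unions. -/
theorem mem_matches'_deriv_iff (a : A) (E : RegularExpression A) (u : List A) :
    u ∈ (E.deriv a).matches' ↔ ∃ F ∈ pderiv a E, u ∈ F.matches' := by
  have mul_right (E G : RegularExpression A)
      (ih : ∀ u, u ∈ (E.deriv a).matches' ↔ ∃ F ∈ pderiv a E, u ∈ F.matches') (u : List A) :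
      u ∈ (E.deriv a).matches' * G.matches' ↔
        ∃ F ∈ (fun H => H * G) '' pderiv a E, u ∈ F.matches' := by
    simp only [Set.exists_mem_image, RegularExpression.matches'_mul, Language.mem_mul, ih]
    grind
  induction E generalizing u with
  | zero => simp [pderiv]
  | epsilon => simp [pderiv]
  | char b =>
    by_cases h : b = a
    · simp [pderiv, RegularExpression.deriv, h]
    · simp [pderiv, RegularExpression.deriv, h]
  | plus E F ihE ihF =>
    simp only [pderiv, RegularExpression.deriv, RegularExpression.matches'_add, Language.mem_add,
      ihE, ihF, Set.mem_union]
    grind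
  | comp E F ihE ihF =>
    have hE := mul_right E F ihE u
    by_cases h : E.matchEpsilon
    · simp only [pderiv, RegularExpression.deriv, h, if_true, RegularExpression.matches'_add,
        RegularExpression.matches'_mul, Language.mem_add, hE, ihF, Set.mem_union]
      grind
    · simpa only [pderiv, RegularExpression.deriv, h, if_false, Bool.false_eq_true,
        RegularExpression.matches'_mul] using hE
  | star E ihE =>
    simpa only [pderiv, RegularExpression.deriv, RegularExpression.matches'_mul]
      using mul_right E (.star E) ihE u

theorem cons_mem_matches'_iff (a : A) (E : RegularExpression A) (u : List A) :
    a :: u ∈ E.matches' ↔ ∃ F ∈ pderiv a E, u ∈ F.matches' := by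
  rw [← mem_matches'_deriv_iff, ← RegularExpression.rmatch_iff_matches',
    ← RegularExpression.rmatch_iff_matches']
  rfl

/-- **Derived-term (Antimirov) automaton.** The nondeterministic automaton whose states are the
rational expressions over `A`, with transitions `F →a→ F'` exactly when `F' ∈ ∂ₐF`, unique
initial state `E`, and accepting states the expressions whose language contains `ε`, accepts
exactly `⟦E⟧`. -/
theorem derived_term_automaton (E : RegularExpression A) :
    (NFA.mk (fun F a => pderiv a F) {E}
        {F : RegularExpression A | ([] : List A) ∈ F.matches'}).accepts = E.matches' := by
  ext x
  rw [NFA.accepts_eq_acceptsFrom_start]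
  set M := NFA.mk (fun F a => pderiv a F) {E}
    {F : RegularExpression A | ([] : List A) ∈ F.matches'}
  have key (x : List A) (S : Set (RegularExpression A)) :
      x ∈ M.acceptsFrom S ↔ ∃ F ∈ S, x ∈ F.matches' := by
    induction x generalizing S with
    | nil => exact M.nil_mem_acceptsFrom
    | cons a u ih =>
      have hstep (F : RegularExpression A) : M.step F a = pderiv a F := rfl
      simp only [NFA.cons_mem_acceptsFrom, ih, NFA.mem_stepSet, cons_mem_matches'_iff, hstep]
      grind
  have hstart : M.start = {E} := rfl
  simp [key, hstart]
end

section
/- Derivation and bracketing: let A be an alphabet with decidable equality and let E, F and G be rational expressions over A. Then the number of derived terms of (E·F)·G is at most the number of derived terms of E·(F·G): |D((E·F)·G)| ≤ |D(E·(F·G))|. -/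
/-!
Write `P(E)` for the set of partial derivatives of `E` by nonempty words, `D(E) = {E} ∪ P(E)`, and
`N(E)` for the assertion that some element of `D(E)` accepts the empty word. Then
`D(E·F) = D(E)·F ∪ P(F)` if `N(E)` holds and `D(E·F) = D(E)·F` otherwise, and
`N(E·F) ↔ N(E) ∧ N(F)`. Expanding both bracketings gives, with the same set `S`
(which is `P(F·G)` if `N(E)` holds and empty otherwise),
`D((E·F)·G) = (D(E)·F)·G ∪ S` and `D(E·(F·G)) = D(E)·(F·G) ∪ S`.
The first parts of both unions are in bijection with `D(E)`, so it is enough that the second union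
is disjoint. This holds because a product lying in `P(F·G)` has a right factor of size at most
that of `G`, hence strictly smaller than `F·G`.

The size bound and the finiteness of `D(E)` are both read off an explicit finite superset of
`P(E)`, defined by structural recursion (`antimirovSet`).
-/

variable {A : Type} [DecidableEq A]

open Relation

/-- `H` is a partial derivative of `E` with respect to some letter. -/
def DerivStep (E H : RegularExpression A) : Prop := ∃ a, H ∈ pderiv a E

/-- Some derived term of `E` accepts the empty word (equivalently, `⟦E⟧` is nonempty). -/
def HasNullable (E : RegularExpression A) : Prop :=
  ∃ K, ReflTransGen DerivStep E K ∧ K.matchEpsilon = true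

/-- The structural over-approximation of the set of partial derivatives of an expression by nonempty
words: unlike the derivatives, it ignores the letters and whether the left factor of a product
is nullable. -/
def antimirovSet : RegularExpression A → Set (RegularExpression A)
  | RegularExpression.zero => ∅
  | RegularExpression.epsilon => ∅
  | RegularExpression.char _ => {1}
  | RegularExpression.plus E F => antimirovSet E ∪ antimirovSet F
  | RegularExpression.comp E F => (fun G => G * F) '' antimirovSet E ∪ antimirovSet F
  | RegularExpression.star E => (fun G => G * RegularExpression.star E) '' antimirovSet E

/-- The number of nodes of the syntax tree. -/
def nodeCount : RegularExpression A → ℕ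
  | RegularExpression.zero => 1
  | RegularExpression.epsilon => 1
  | RegularExpression.char _ => 1
  | RegularExpression.plus E F => nodeCount E + nodeCount F + 1
  | RegularExpression.comp E F => nodeCount E + nodeCount F + 1
  | RegularExpression.star E => nodeCount E + 1

theorem nodeCount_mul {A : Type} (E F : RegularExpression A) :
    nodeCount (E * F) = nodeCount E + nodeCount F + 1 := rfl

theorem mul_eq_mul_iff {A : Type} {E F G H : RegularExpression A} : E * F = G * H ↔ E = G ∧ F = H :=
  ⟨fun h => by injection h with h₁ h₂; exact ⟨h₁, h₂⟩, fun h => by rw [h.1, h.2]⟩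

theorem matchEpsilon_mul_iff {A : Type} {E F : RegularExpression A} :
    (E * F).matchEpsilon = true ↔ E.matchEpsilon = true ∧ F.matchEpsilon = true := by
  change (E.matchEpsilon && F.matchEpsilon) = true ↔ _
  simp

/-! ### Derived terms as reachability -/

theorem derivStep_mul_iff {E F H : RegularExpression A} :
    DerivStep (E * F) H ↔
      (∃ K, DerivStep E K ∧ H = K * F) ∨ (E.matchEpsilon = true ∧ DerivStep F H) := by
  have key : ∀ a, H ∈ pderiv a (E * F) ↔
      (∃ K, K ∈ pderiv a E ∧ H = K * F) ∨ (E.matchEpsilon = true ∧ H ∈ pderiv a F) := by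
    intro a
    change H ∈ (if E.matchEpsilon then (fun G => G * F) '' pderiv a E ∪ pderiv a F
      else (fun G => G * F) '' pderiv a E) ↔ _
    split_ifs with h <;> simp [h, eq_comm]
  simp only [DerivStep, key]
  constructor
  · rintro ⟨a, ⟨K, hK, rfl⟩ | ⟨h, h'⟩⟩
    · exact Or.inl ⟨K, ⟨a, hK⟩, rfl⟩
    · exact Or.inr ⟨h, a, h'⟩
  · rintro (⟨K, ⟨a, hK⟩, rfl⟩ | ⟨h, a, h'⟩)
    · exact ⟨a, Or.inl ⟨K, hK, rfl⟩⟩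
    · exact ⟨a, Or.inr ⟨h, h'⟩⟩

theorem reflTransGen_derivStep_iff {E H : RegularExpression A} :
    ReflTransGen DerivStep E H ↔ ∃ u, H ∈ pderivWord u E := by
  constructor
  · intro h
    induction h using ReflTransGen.head_induction_on with
    | refl => exact ⟨[], rfl⟩
    | head h _ ih =>
      obtain ⟨a, ha⟩ := h
      obtain ⟨u, hu⟩ := ih
      exact ⟨a :: u, Set.mem_biUnion ha hu⟩
  · rintro ⟨u, hu⟩
    induction u generalizing E with
    | nil => rw [show H = E from hu]
    | cons a u ih =>
      simp only [pderivWord, Set.mem_iUnion] at hu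
      obtain ⟨K, hK, hu⟩ := hu
      exact ReflTransGen.head ⟨a, hK⟩ (ih hu)

theorem mem_derivedTerms_iff {E H : RegularExpression A} :
    H ∈ derivedTerms E ↔ ReflTransGen DerivStep E H := by
  rw [reflTransGen_derivStep_iff]
  simp only [derivedTerms, Set.mem_union, Set.mem_singleton_iff, Set.mem_iUnion]
  constructor
  · rintro (rfl | ⟨u, _, hu⟩)
    · exact ⟨[], rfl⟩
    · exact ⟨u, hu⟩
  · rintro ⟨u, hu⟩
    by_cases h : u = []
    · subst h
      exact Or.inl hu
    · exact Or.inr ⟨u, h, hu⟩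

/-! ### Derived terms of a product -/

theorem reflTransGen_mul_right {E K : RegularExpression A} (F : RegularExpression A)
    (h : ReflTransGen DerivStep E K) : ReflTransGen DerivStep (E * F) (K * F) :=
  h.lift (fun K => K * F) fun _ _ hab => derivStep_mul_iff.2 (Or.inl ⟨_, hab, rfl⟩)

theorem transGen_mul_of_hasNullable {E F H : RegularExpression A} (hE : HasNullable E)
    (h : TransGen DerivStep F H) : TransGen DerivStep (E * F) H := by
  obtain ⟨K, hK, hn⟩ := hE
  obtain ⟨L, hL, hLH⟩ := TransGen.head'_iff.1 h
  exact TransGen.trans_right (reflTransGen_mul_right F hK)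
    (TransGen.head' (derivStep_mul_iff.2 (Or.inr ⟨hn, hL⟩)) hLH)

theorem transGen_mul_iff {E F H : RegularExpression A} :
    TransGen DerivStep (E * F) H ↔
      (∃ K, TransGen DerivStep E K ∧ H = K * F) ∨ (HasNullable E ∧ TransGen DerivStep F H) := by
  constructor
  · intro h
    induction h with
    | single h =>
      rcases derivStep_mul_iff.1 h with ⟨K, hK, rfl⟩ | ⟨hn, h⟩
      · exact Or.inl ⟨K, .single hK, rfl⟩
      · exact Or.inr ⟨⟨E, .refl, hn⟩, .single h⟩
    | tail _ hs ih =>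
      rcases ih with ⟨K, hK, rfl⟩ | ⟨hn, h⟩
      · rcases derivStep_mul_iff.1 hs with ⟨L, hL, rfl⟩ | ⟨hn, h⟩
        · exact Or.inl ⟨L, hK.tail hL, rfl⟩
        · exact Or.inr ⟨⟨K, hK.to_reflTransGen, hn⟩, .single h⟩
      · exact Or.inr ⟨hn, h.tail hs⟩
  · rintro (⟨K, hK, rfl⟩ | ⟨hn, h⟩)
    · exact hK.lift (fun K => K * F) fun _ _ hab => derivStep_mul_iff.2 (Or.inl ⟨_, hab, rfl⟩)
    · exact transGen_mul_of_hasNullable hn h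

theorem reflTransGen_mul_iff {E F H : RegularExpression A} :
    ReflTransGen DerivStep (E * F) H ↔
      (∃ K, ReflTransGen DerivStep E K ∧ H = K * F) ∨
        (HasNullable E ∧ TransGen DerivStep F H) := by
  constructor
  · intro h
    rcases reflTransGen_iff_eq_or_transGen.1 h with rfl | h
    · exact Or.inl ⟨E, .refl, rfl⟩
    · rcases transGen_mul_iff.1 h with ⟨K, hK, rfl⟩ | h
      · exact Or.inl ⟨K, hK.to_reflTransGen, rfl⟩
      · exact Or.inr h
  · rintro (⟨K, hK, rfl⟩ | ⟨hn, h⟩)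
    · exact reflTransGen_mul_right F hK
    · exact (transGen_mul_of_hasNullable hn h).to_reflTransGen

theorem hasNullable_mul_iff {E F : RegularExpression A} :
    HasNullable (E * F) ↔ HasNullable E ∧ HasNullable F := by
  constructor
  · rintro ⟨H, hH, hn⟩
    rcases reflTransGen_mul_iff.1 hH with ⟨K, hK, rfl⟩ | ⟨hE, h⟩
    · obtain ⟨h1, h2⟩ := matchEpsilon_mul_iff.1 hn
      exact ⟨⟨K, hK, h1⟩, ⟨F, .refl, h2⟩⟩
    · exact ⟨hE, ⟨H, h.to_reflTransGen, hn⟩⟩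
  · rintro ⟨hE, L, hL, hn⟩
    rcases reflTransGen_iff_eq_or_transGen.1 hL with rfl | h
    · obtain ⟨K, hK, hKn⟩ := hE
      exact ⟨K * L, reflTransGen_mul_right L hK, matchEpsilon_mul_iff.2 ⟨hKn, hn⟩⟩
    · exact ⟨L, (transGen_mul_of_hasNullable hE h).to_reflTransGen, hn⟩

/-! ### Finiteness and the size of right factors -/

theorem pderiv_subset_antimirovSet (a : A) (E : RegularExpression A) :
    pderiv a E ⊆ antimirovSet E := by
  induction E with
  | zero => exact subset_rfl
  | epsilon => exact subset_rfl
  | char b =>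
    simp only [pderiv, antimirovSet]
    split_ifs <;> simp
  | plus E F ihE ihF => exact Set.union_subset_union ihE ihF
  | comp E F ihE ihF =>
    simp only [pderiv, antimirovSet]
    split_ifs
    · exact Set.union_subset_union (Set.image_mono ihE) ihF
    · exact (Set.image_mono ihE).trans Set.subset_union_left
  | star E ih => exact Set.image_mono ih

/-- The structural over-approximation is closed under derivation. -/
theorem antimirovSet_closed {E H K : RegularExpression A} (hH : H ∈ antimirovSet E)
    (hK : DerivStep H K) : K ∈ antimirovSet E := by
  induction E generalizing H K with
  | zero => exact hH.elim
  | epsilon => exact hH.elim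
  | char b =>
    obtain ⟨a, ha⟩ := hK
    rw [show H = 1 from hH] at ha
    exact ha.elim
  | plus E F ihE ihF => exact hH.imp (fun h => ihE h hK) (fun h => ihF h hK)
  | comp E F ihE ihF =>
    rcases hH with ⟨L, hL, rfl⟩ | hH
    · rcases derivStep_mul_iff.1 hK with ⟨M, hM, rfl⟩ | ⟨_, a, ha⟩
      · exact Or.inl ⟨M, ihE hL hM, rfl⟩
      · exact Or.inr (pderiv_subset_antimirovSet a F ha)
    · exact Or.inr (ihF hH hK)
  | star E ih =>
    obtain ⟨L, hL, rfl⟩ := hH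
    rcases derivStep_mul_iff.1 hK with ⟨M, hM, rfl⟩ | ⟨_, a, ha⟩
    · exact ⟨M, ih hL hM, rfl⟩
    · exact pderiv_subset_antimirovSet a (RegularExpression.star E) ha

theorem mem_antimirovSet_of_transGen {E H : RegularExpression A} (h : TransGen DerivStep E H) :
    H ∈ antimirovSet E := by
  induction h with
  | single h => exact pderiv_subset_antimirovSet _ _ h.choose_spec
  | tail _ hs ih => exact antimirovSet_closed ih hs

theorem finite_antimirovSet {A : Type} (E : RegularExpression A) : (antimirovSet E).Finite := by
  induction E with
  | zero => exact Set.finite_empty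
  | epsilon => exact Set.finite_empty
  | char b => exact Set.finite_singleton _
  | plus E F ihE ihF => exact ihE.union ihF
  | comp E F ihE ihF => exact (ihE.image _).union ihF
  | star E ih => exact ih.image _

theorem nodeCount_le_of_mul_mem_antimirovSet {A : Type} {E H K : RegularExpression A}
    (h : H * K ∈ antimirovSet E) : nodeCount K ≤ nodeCount E := by
  induction E generalizing H K with
  | zero => exact h.elim
  | epsilon => exact h.elim
  | char b =>
    have h : H * K = 1 := h
    exact RegularExpression.noConfusion rfl (heq_of_eq h)
  | plus E F ihE ihF =>
    simp only [nodeCount]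
    rcases h with h | h
    · have := ihE h
      lia
    · have := ihF h
      lia
  | comp E F ihE ihF =>
    simp only [nodeCount]
    rcases h with ⟨L, _, hL⟩ | h
    · rw [← (mul_eq_mul_iff.1 hL).2]
      lia
    · have := ihF h
      lia
  | star E ih =>
    obtain ⟨L, _, hL⟩ := h
    rw [← (mul_eq_mul_iff.1 hL).2]

theorem finite_derivedTerms (E : RegularExpression A) : (derivedTerms E).Finite := by
  refine ((Set.finite_singleton E).union (finite_antimirovSet E)).subset fun H hH => ?_
  rcases reflTransGen_iff_eq_or_transGen.1 (mem_derivedTerms_iff.1 hH) with rfl | h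
  · exact Or.inl rfl
  · exact Or.inr (mem_antimirovSet_of_transGen h)

/-- A derivative of `F * G` by a nonempty word does not have `F * G` itself as right factor,
as all its right factors are smaller. -/
theorem not_transGen_mul_mul {F G K : RegularExpression A} :
    ¬ TransGen DerivStep (F * G) (K * (F * G)) := by
  intro h
  rcases transGen_mul_iff.1 h with ⟨L, _, hL⟩ | ⟨_, h⟩
  · have := congrArg nodeCount (mul_eq_mul_iff.1 hL).2
    rw [nodeCount_mul] at this
    lia
  · have := nodeCount_le_of_mul_mem_antimirovSet (mem_antimirovSet_of_transGen h)
    rw [nodeCount_mul] at this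
    lia

/-! ### Comparison of the two bracketings -/

theorem derivedTerms_mul (E F : RegularExpression A) :
    derivedTerms (E * F) =
      (fun K => K * F) '' derivedTerms E ∪ {H | HasNullable E ∧ TransGen DerivStep F H} := by
  ext H
  simp only [Set.mem_union, Set.mem_image, Set.mem_ofPred_eq, mem_derivedTerms_iff,
    reflTransGen_mul_iff, eq_comm (a := H)]

theorem derivedTerms_mul_mul (E F G : RegularExpression A) :
    derivedTerms ((E * F) * G) =
      (fun K => (K * F) * G) '' derivedTerms E ∪
        {H | HasNullable E ∧ TransGen DerivStep (F * G) H} := by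
  ext H
  simp only [Set.mem_union, Set.mem_image, Set.mem_ofPred_eq, mem_derivedTerms_iff,
    reflTransGen_mul_iff, transGen_mul_iff, hasNullable_mul_iff]
  constructor
  · rintro (⟨L, ⟨K, hK, rfl⟩ | ⟨hE, hL⟩, rfl⟩ | ⟨⟨hE, hF⟩, h⟩)
    · exact Or.inl ⟨K, hK, rfl⟩
    · exact Or.inr ⟨hE, Or.inl ⟨L, hL, rfl⟩⟩
    · exact Or.inr ⟨hE, Or.inr ⟨hF, h⟩⟩
  · rintro (⟨K, hK, rfl⟩ | ⟨hE, ⟨L, hL, rfl⟩ | ⟨hF, h⟩⟩)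
    · exact Or.inl ⟨K * F, Or.inl ⟨K, hK, rfl⟩, rfl⟩
    · exact Or.inl ⟨L, Or.inr ⟨hE, hL⟩, rfl⟩
    · exact Or.inr ⟨⟨hE, hF⟩, h⟩

/-- **Derivation and bracketing.** The number of derived terms of `(E·F)·G` is at most the
number of derived terms of `E·(F·G)`. -/
theorem derivedTerms_bracketing (E F G : RegularExpression A) :
    (derivedTerms ((E * F) * G)).ncard ≤ (derivedTerms (E * (F * G))).ncard := by
  have hfin := finite_derivedTerms (E * (F * G))
  rw [derivedTerms_mul] at hfin
  rw [derivedTerms_mul_mul, derivedTerms_mul, Set.ncard_union_eq ?_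
    (hfin.subset Set.subset_union_left) (hfin.subset Set.subset_union_right),
    Set.ncard_image_of_injective (derivedTerms E) fun _ _ h => (mul_eq_mul_iff.1 h).1]
  · exact (Set.ncard_union_le _ _).trans
      (Nat.add_le_add_right (Set.ncard_image_le (finite_derivedTerms E)) _)
  · rw [Set.disjoint_left]
    rintro _ ⟨K, _, rfl⟩ ⟨_, h⟩
    exact not_transGen_mul_mul h
end

section
/- McKnight's theorem: let M be a finitely generated monoid (there is a finite subset of M generating M as a monoid). Then every recognisable subset of M is a rational subset of M. -/
/-!
The proof runs Kleene's algorithm inside `M` itself. Given `α : M →* N` with `N` finite and a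
finite generating set `G` of `M`, consider the right Cayley graph of `N`: its vertices are the
elements of `N`, and each `g ∈ G` labels an edge from `p` to `p * α g`. Because `G` generates `M`,
the labels of the walks from `1` to `n` are exactly the elements of `α ⁻¹' {n}`.

For a set `X` of vertices, let `walkSet E X p q` be the set of labels of walks from `p` to `q` whose
intermediate vertices all lie in `X`. Cutting a walk at its visits to `x` gives Kleene's recursion
`walkSet_insert`, so by induction on the finite set `X` all these sets are rational. Finally `P` is
the finite union of the fibres `α ⁻¹' {n}`, `n ∈ α '' P`.
-/

open Pointwise

/-- Rational subsets of a monoid `M`: the smallest family of subsets containing the empty set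
and all singletons, and closed under binary union, set product, and Kleene star (the submonoid
generated by a set). -/
inductive IsRationalSubset {M : Type} [Monoid M] : Set M → Prop
  | empty : IsRationalSubset (∅ : Set M)
  | singleton (m : M) : IsRationalSubset {m}
  | union {S T : Set M} :
      IsRationalSubset S → IsRationalSubset T → IsRationalSubset (S ∪ T)
  | mul {S T : Set M} :
      IsRationalSubset S → IsRationalSubset T → IsRationalSubset (S * T)
  | star {S : Set M} :
      IsRationalSubset S → IsRationalSubset ((Submonoid.closure S : Submonoid M) : Set M)

theorem IsRationalSubset.biUnion {M : Type} [Monoid M] {ι : Type*} {s : Set ι} (hs : s.Finite)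
    (f : ι → Set M) (hf : ∀ i, IsRationalSubset (f i)) : IsRationalSubset (⋃ i ∈ s, f i) := by
  induction s, hs using Set.Finite.induction_on with
  | empty => simpa using IsRationalSubset.empty
  | insert _ _ ih => rw [Set.biUnion_insert]; exact (hf _).union ih

theorem IsRationalSubset.of_finite {M : Type} [Monoid M] {s : Set M} (hs : s.Finite) :
    IsRationalSubset s := by
  simpa using IsRationalSubset.biUnion hs (fun m => {m}) IsRationalSubset.singleton

/-- `IsWalk E X p q m`: in the graph on `V` whose edges from `p` to `q` are labelled by the elements
of `E p q`, some walk from `p` to `q` has label product `m` and all its intermediate vertices in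
`X`. The endpoints need not be in `X`. Walks are built by gluing at a vertex of `X`, rather than by
adding one edge at a time, so that concatenation is a constructor. -/
inductive IsWalk {M : Type} [Monoid M] {V : Type*} (E : V → V → Set M) (X : Set V) :
    V → V → M → Prop
  | nil (p : V) : IsWalk E X p p 1
  | edge {p q : V} {m : M} : m ∈ E p q → IsWalk E X p q m
  | comp {p q r : V} {m n : M} :
      r ∈ X → IsWalk E X p r m → IsWalk E X r q n → IsWalk E X p q (m * n)

/-- The set of labels of walks from `p` to `q` with intermediate vertices in `X`. -/
def walkSet {M : Type} [Monoid M] {V : Type*} (E : V → V → Set M) (X : Set V) (p q : V) : Set M :=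
  {m | IsWalk E X p q m}

theorem IsWalk.mono {M : Type} [Monoid M] {V : Type*} {E : V → V → Set M} {X Y : Set V}
    (h : X ⊆ Y) {p q : V} {m : M} (w : IsWalk E X p q m) : IsWalk E Y p q m := by
  induction w with
  | nil p => exact .nil p
  | edge h => exact .edge h
  | comp hr _ _ ih₁ ih₂ => exact .comp (h hr) ih₁ ih₂

theorem IsWalk.of_mem_closure {M : Type} [Monoid M] {V : Type*} {E : V → V → Set M} {X : Set V}
    {x : V} (hx : x ∈ X) {m : M} (hm : m ∈ Submonoid.closure (walkSet E X x x)) :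
    IsWalk E X x x m := by
  induction hm using Submonoid.closure_induction with
  | mem _ h => exact h
  | one => exact .nil x
  | mul _ _ _ _ h₁ h₂ => exact .comp hx h₁ h₂

/-- Kleene's recursion: a walk through `insert x X` either avoids `x` or decomposes into a walk
to `x`, a sequence of loops at `x`, and a walk from `x`, all with intermediate vertices in `X`. -/
theorem walkSet_insert {M : Type} [Monoid M] {V : Type*} (E : V → V → Set M) (X : Set V)
    (x p q : V) :
    walkSet E (insert x X) p q = walkSet E X p q ∪
      walkSet E X p x * (Submonoid.closure (walkSet E X x x) : Set M) * walkSet E X x q := by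
  apply Set.Subset.antisymm
  · intro m w
    change IsWalk E (insert x X) p q m at w
    induction w with
    | nil p => exact Or.inl (.nil p)
    | edge h => exact Or.inl (.edge h)
    | @comp p q r m n hr _ _ ih₁ ih₂ =>
      rcases hr with rfl | hr
      · -- For walks ending or starting at `x` itself, both alternatives of the union can be
        -- rewritten with a trailing (resp. leading) sequence of loops.
        have h₁ : ∃ a ∈ walkSet E X p r, ∃ s ∈ Submonoid.closure (walkSet E X r r),
            a * s = m := by
          rcases ih₁ with h | ⟨_, ⟨a, ha, s, hs, rfl⟩, b, hb, rfl⟩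
          · exact ⟨m, h, 1, one_mem _, mul_one m⟩
          · exact ⟨a, ha, s * b, mul_mem hs (Submonoid.subset_closure hb), by
              simp [mul_assoc]⟩
        have h₂ : ∃ t ∈ Submonoid.closure (walkSet E X r r), ∃ d ∈ walkSet E X r q,
            t * d = n := by
          rcases ih₂ with h | ⟨_, ⟨c, hc, t, ht, rfl⟩, d, hd, rfl⟩
          · exact ⟨1, one_mem _, n, h, one_mul n⟩
          · exact ⟨c * t, mul_mem (Submonoid.subset_closure hc) ht, d, hd, rfl⟩
        obtain ⟨a, ha, s, hs, rfl⟩ := h₁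
        obtain ⟨t, ht, d, hd, rfl⟩ := h₂
        exact Or.inr ⟨_, ⟨a, ha, s * t, mul_mem hs ht, rfl⟩, d, hd, by simp [mul_assoc]⟩
      · rcases ih₁ with h₁ | ⟨_, ⟨a, ha, s, hs, rfl⟩, b, hb, rfl⟩ <;>
          rcases ih₂ with h₂ | ⟨_, ⟨c, hc, t, ht, rfl⟩, d, hd, rfl⟩
        · exact Or.inl (.comp hr h₁ h₂)
        · exact Or.inr ⟨_, ⟨m * c, .comp hr h₁ hc, t, ht, rfl⟩, d, hd, by simp [mul_assoc]⟩
        · exact Or.inr ⟨_, ⟨a, ha, s, hs, rfl⟩, b * n, .comp hr hb h₂, by simp [mul_assoc]⟩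
        · have hbc : b * c ∈ Submonoid.closure (walkSet E X x x) :=
            Submonoid.subset_closure (.comp hr hb hc)
          exact Or.inr ⟨_, ⟨a, ha, s * (b * c) * t, mul_mem (mul_mem hs hbc) ht, rfl⟩, d, hd, by
            simp [mul_assoc]⟩
  · have hX : X ⊆ insert x X := Set.subset_insert x X
    have hx : x ∈ insert x X := Set.mem_insert x X
    rintro m (h | ⟨_, ⟨a, ha, s, hs, rfl⟩, b, hb, rfl⟩)
    · exact IsWalk.mono hX h
    · have hs' : s ∈ Submonoid.closure (walkSet E (insert x X) x x) :=
        Submonoid.closure_mono (fun _ h => IsWalk.mono hX h) hs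
      exact .comp hx (.comp hx (IsWalk.mono hX ha) (.of_mem_closure hx hs')) (IsWalk.mono hX hb)

theorem walkSet_empty {M : Type} [Monoid M] {V : Type*} (E : V → V → Set M) (p q : V) :
    walkSet E ∅ p q = {m | m = 1 ∧ p = q} ∪ E p q := by
  ext m
  constructor
  · intro w
    cases w with
    | nil => exact Or.inl ⟨rfl, rfl⟩
    | edge h => exact Or.inr h
    | comp h => exact h.elim
  · rintro (⟨rfl, rfl⟩ | h)
    · exact .nil p
    · exact .edge h

theorem isRationalSubset_walkSet {M : Type} [Monoid M] {V : Type*} {E : V → V → Set M}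
    (hE : ∀ p q, (E p q).Finite) {X : Set V} (hX : X.Finite) (p q : V) :
    IsRationalSubset (walkSet E X p q) := by
  induction X, hX using Set.Finite.induction_on generalizing p q with
  | empty =>
    rw [walkSet_empty]
    exact .of_finite (((Set.finite_singleton 1).subset fun _ h => h.1).union (hE p q))
  | insert _ _ ih =>
    rw [walkSet_insert]
    exact (ih _ _).union (((ih _ _).mul (ih _ _).star).mul (ih _ _))

/-- The labels of walks from `1` to `n` in the Cayley graph of `α` form the fibre of `α` over
`n`. -/
theorem walkSet_cayley {M : Type} [Monoid M] {N : Type*} [Monoid N] (α : M →* N) {G : Set M}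
    (hG : Submonoid.closure G = ⊤) (n : N) :
    walkSet (fun p q => {g | g ∈ G ∧ p * α g = q}) Set.univ 1 n = α ⁻¹' {n} := by
  ext m
  constructor
  · intro w
    have key : ∀ {p q : N} {m : M},
        IsWalk (fun p q => {g | g ∈ G ∧ p * α g = q}) Set.univ p q m → p * α m = q := by
      intro p q m w
      induction w with
      | nil p => simp
      | edge h => exact h.2
      | comp _ _ _ ih₁ ih₂ => rw [map_mul, ← mul_assoc, ih₁, ih₂]
    simpa using key w
  · rintro rfl
    have key : ∀ p : N,
        IsWalk (fun p q => {g | g ∈ G ∧ p * α g = q}) Set.univ p (p * α m) m := by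
      have hm : m ∈ Submonoid.closure G := hG ▸ Submonoid.mem_top m
      induction hm using Submonoid.closure_induction with
      | mem g hg => exact fun p => .edge ⟨hg, rfl⟩
      | one => intro p; simpa using IsWalk.nil p
      | mul a b _ _ iha ihb =>
        intro p
        rw [map_mul, ← mul_assoc]
        exact .comp (Set.mem_univ _) (iha p) (ihb _)
    change IsWalk _ _ _ _ _
    simpa using key 1

/-- **McKnight's theorem.** In a finitely generated monoid, every recognisable subset (i.e. a
subset of the form `α⁻¹(α(P))` for a morphism `α` to a finite monoid) is rational. -/
theorem mcknight {M : Type} [Monoid M]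
    (hfg : ∃ G : Finset M, Submonoid.closure (G : Set M) = ⊤)
    (P : Set M)
    (hrec : ∃ (N : MonCat) (_ : Fintype N) (α : M →* N), P = α ⁻¹' (α '' P)) :
    IsRationalSubset P := by
  obtain ⟨G, hG⟩ := hfg
  obtain ⟨N, _, α, hP⟩ := hrec
  have hfib (n : N) : IsRationalSubset (α ⁻¹' {n}) := by
    rw [← walkSet_cayley α hG n]
    exact isRationalSubset_walkSet (fun _ _ => G.finite_toSet.subset fun _ h => h.1)
      Set.finite_univ 1 n
  rw [hP, ← Set.biUnion_preimage_singleton]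
  exact .biUnion (Set.toFinite _) _ hfib
end

section
/- The inclusion of recognisable subsets in rational subsets is strict in general: in the monoid M = ℕ × ℕ (the free commutative monoid on two generators, written multiplicatively as Multiplicative (ℕ × ℕ)), the diagonal D = {(n,n) : n ∈ ℕ} is a rational subset of M but is not a recognisable subset of M. -/
/-! The diagonal is the submonoid generated by `(1, 1)`, hence rational. It is not recognisable: for
a morphism `α` to a finite monoid, pigeonhole gives `m ≠ n` with `α (m, 0) = α (n, 0)`;
multiplying by `α (0, m)` gives `α (m, m) = α (n, m)`, so `α` cannot separate the diagonal from the
off-diagonal element `(n, m)`. -/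

open Pointwise

/-- In the free commutative monoid `M = Multiplicative (ℕ × ℕ)` on two generators, the diagonal
`D = {(n,n) : n ∈ ℕ}` is a rational subset of `M` but not a recognisable subset of `M`: the
inclusion of recognisable subsets in rational subsets is strict in general. -/
theorem diagonal_rational_not_recognisable :
    IsRationalSubset
        {x : Multiplicative (ℕ × ℕ) | ∃ n : ℕ, x = Multiplicative.ofAdd (n, n)} ∧
      ¬ ∃ (N : MonCat) (_ : Fintype N) (α : Multiplicative (ℕ × ℕ) →* N),
          {x : Multiplicative (ℕ × ℕ) | ∃ n : ℕ, x = Multiplicative.ofAdd (n, n)} =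
            α ⁻¹' (α '' {x : Multiplicative (ℕ × ℕ) | ∃ n : ℕ,
              x = Multiplicative.ofAdd (n, n)}) := by
  constructor
  · have h := IsRationalSubset.star
      (IsRationalSubset.singleton (Multiplicative.ofAdd ((1, 1) : ℕ × ℕ)))
    convert h using 1
    ext x
    simp only [Set.mem_setOf_eq, SetLike.mem_coe, Submonoid.mem_closure_singleton,
      ← ofAdd_nsmul, Prod.smul_mk, smul_eq_mul, mul_one, eq_comm]
  · rintro ⟨N, hN, α, hD⟩
    obtain ⟨m, n, hmn, h⟩ := Finite.exists_ne_map_eq_of_infinite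
      (fun k : ℕ => α (Multiplicative.ofAdd (k, 0)))
    have split : ∀ k : ℕ, α (Multiplicative.ofAdd (k, m)) =
        α (Multiplicative.ofAdd (k, 0)) * α (Multiplicative.ofAdd (0, m)) := by
      intro k
      rw [← map_mul, ← ofAdd_add, Prod.mk_add_mk, add_zero, zero_add]
    have key : α (Multiplicative.ofAdd (m, m)) = α (Multiplicative.ofAdd (n, m)) := by
      rw [split m, split n]
      exact congrArg (· * _) h
    have hmem : Multiplicative.ofAdd (n, m) ∈
        {x : Multiplicative (ℕ × ℕ) | ∃ n : ℕ, x = Multiplicative.ofAdd (n, n)} := by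
      rw [hD]
      exact ⟨_, ⟨m, rfl⟩, key⟩
    obtain ⟨k, hk⟩ := hmem
    obtain ⟨h₁, h₂⟩ := Prod.mk.inj (Multiplicative.ofAdd.injective hk)
    exact hmn (h₂.trans h₁.symm)
end
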